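/- arXiv:2206.13912 — 16 statements merged into one kernel-verified Lean document; each statement's English description precedes it below -/
import Mathlib

section
/- Let A be a finite-dimensional evolution algebra over a field K with natural basis B = {e_i}_{i∈Λ} and structure matrix (ω_ji) (so e_i² = Σ_j ω_ji e_j), and let E be the directed graph of A relative to B. For any subset S ⊆ Λ, the linear span of {e_i : i ∈ T(S)}, where T(S) consists of the vertices of S together with all vertices reachable from a vertex of S by a directed path, is a (two-sided) ideal of A. -/
/-- Let `A` be a finite-dimensional evolution algebra over a field `K`
with natural basis `b = {e_i}` and structure matrix `ω j i = (b.repr (e_i²)) j`, and let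
the directed graph have an edge `i → j` iff `ω j i ≠ 0`.  For any `S ⊆ ι`, the span of
`{e_i : i ∈ T(S)}`, where `T(S)` is `S` together with all vertices reachable from `S`
by a directed path, is a two-sided ideal of `A`. -/
theorem span_tree_isIdeal {K A ι : Type*} [Field K] [NonUnitalNonAssocCommRing A]
    [Module K A] [SMulCommClass K A A] [IsScalarTower K A A] [Fintype ι]
    (b : Module.Basis ι K A) (hnat : ∀ i j : ι, i ≠ j → b i * b j = 0)
    (edge : ι → ι → Prop)
    (hedge : ∀ i j : ι, edge i j ↔ b.repr (b i * b i) j ≠ 0)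
    (S : Set ι)
    (T : Set ι) (hT : T = {v | ∃ u ∈ S, Relation.ReflTransGen edge u v}) :
    ∀ x ∈ Submodule.span K (⇑b '' T), ∀ a : A,
      a * x ∈ Submodule.span K (⇑b '' T) ∧ x * a ∈ Submodule.span K (⇑b '' T) := by
  have key : ∀ x ∈ Submodule.span K (⇑b '' T), ∀ a : A,
      x * a ∈ Submodule.span K (⇑b '' T) := by
    intro x hx a
    induction hx using Submodule.span_induction with
    | mem x hx =>
      obtain ⟨i, hi, rfl⟩ := hx
      rw [← b.sum_repr a, Finset.mul_sum]
      refine Submodule.sum_mem _ fun j _ => ?_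
      rw [mul_smul_comm]
      refine Submodule.smul_mem _ _ ?_
      by_cases hij : i = j
      · subst hij
        rw [← b.sum_repr (b i * b i)]
        refine Submodule.sum_mem _ fun k _ => ?_
        by_cases hk : b.repr (b i * b i) k = 0
        · rw [hk, zero_smul]
          exact Submodule.zero_mem _
        · refine Submodule.smul_mem _ _ (Submodule.subset_span ⟨k, ?_, rfl⟩)
          rw [hT] at hi ⊢
          obtain ⟨u, hu, hr⟩ := hi
          exact ⟨u, hu, hr.tail ((hedge i k).2 hk)⟩
      · rw [hnat i j hij]
        exact Submodule.zero_mem _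
    | zero =>
      rw [zero_mul]
      exact Submodule.zero_mem _
    | add x y _ _ hx hy =>
      rw [add_mul]
      exact Submodule.add_mem _ hx hy
    | smul c x _ hx =>
      rw [smul_mul_assoc]
      exact Submodule.smul_mem _ _ hx
  intro x hx a
  exact ⟨mul_comm x a ▸ key x hx a, key x hx a⟩
end

section
/- Let A be a finite-dimensional perfect evolution algebra over a field K and let E be its directed graph relative to a natural basis. If E has a closed directed path that visits every vertex, then A is a simple algebra. -/
theorem chain_forward {ι : Type*} {R : ι → ι → Prop} {P : ι → Prop}
    (hP : ∀ i j, R i j → P i → P j) :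
    ∀ (l : List ι) (a : ι), List.IsChain R (a :: l) → P a → ∀ v ∈ l, P v := by
  intro l
  induction l with
  | nil => intro a _ _ v hv; simp at hv
  | cons c t ih =>
    intro a h ha v hv
    rw [List.isChain_cons_cons] at h
    have hc := hP _ _ h.1 ha
    rcases List.mem_cons.1 hv with rfl | hv
    · exact hc
    · exact ih c h.2 hc v hv

theorem chain_last {ι : Type*} {R : ι → ι → Prop} {P : ι → Prop}
    (hP : ∀ i j, R i j → P i → P j) :
    ∀ (l : List ι) (h : l ≠ []), List.IsChain R l → ∀ v ∈ l, P v → P (l.getLast h) := by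
  intro l
  induction l with
  | nil => intro h; exact absurd rfl h
  | cons c t ih =>
    intro h hc v hv hPv
    by_cases ht : t = []
    · subst ht
      simp at hv
      subst hv
      simpa using hPv
    · rw [List.getLast_cons ht]
      rcases List.mem_cons.1 hv with rfl | hv
      · exact chain_forward hP t v hc hPv _ (List.getLast_mem ht)
      · exact ih ht hc.tail v hv hPv

/-- Let `A` be a finite-dimensional perfect evolution algebra over a field `K`
(perfect: the structure matrix relative to a natural basis is invertible) and let the directed
graph relative to that basis have an edge `i → j` iff the `e_j`-coordinate of `e_i²` is nonzero.
If the graph has a closed directed path visiting every vertex (encoded as a nonempty list `l`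
with `List.Chain edge (l.getLast h) l` containing all vertices), then `A` is a simple algebra:
`A² ≠ 0` and its only two-sided ideals are `0` and `A`. -/
theorem simple_of_closed_path_visiting_all {K A ι : Type*} [Field K]
    [NonUnitalNonAssocCommRing A] [Module K A] [SMulCommClass K A A] [IsScalarTower K A A]
    [Fintype ι] [DecidableEq ι]
    (b : Module.Basis ι K A) (hnat : ∀ i j : ι, i ≠ j → b i * b j = 0)
    (hperf : IsUnit (Matrix.of fun j i : ι => b.repr (b i * b i) j))
    (edge : ι → ι → Prop)
    (hedge : ∀ i j : ι, edge i j ↔ b.repr (b i * b i) j ≠ 0)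
    (hcycle : ∃ (l : List ι) (h : l ≠ []),
        List.Chain edge (l.getLast h) l ∧ ∀ v : ι, v ∈ l) :
    (∃ x y : A, x * y ≠ 0) ∧
      ∀ I : Submodule K A, (∀ x ∈ I, ∀ a : A, a * x ∈ I ∧ x * a ∈ I) → I = ⊥ ∨ I = ⊤ := by
  obtain ⟨l, hl, hch, hall⟩ := hcycle
  have hch' : List.IsChain edge (l.getLast hl :: l) := hch
  have hmul : ∀ (x : A) (i : ι), b i * x = b.repr x i • (b i * b i) := by
    intro x i
    conv_lhs => rw [← b.sum_repr x]
    rw [Finset.mul_sum, Finset.sum_eq_single i]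
    · rw [mul_smul_comm]
    · intro j _ hj
      rw [mul_smul_comm, hnat i j (Ne.symm hj), smul_zero]
    · intro h
      exact absurd (Finset.mem_univ i) h
  constructor
  · obtain ⟨c, t, rfl⟩ := List.exists_cons_of_ne_nil hl
    rw [List.isChain_cons_cons] at hch'
    have h1 := (hedge _ _).1 hch'.1
    refine ⟨b ((c :: t).getLast hl), b ((c :: t).getLast hl), fun h0 => h1 ?_⟩
    rw [h0]
    simp
  · intro I hI
    by_cases hbot : I = ⊥
    · exact Or.inl hbot
    right
    obtain ⟨x, hx, hx0⟩ := Submodule.exists_mem_ne_zero_of_ne_bot hbot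
    have key : ∀ (y : A), y ∈ I → ∀ i, b.repr y i ≠ 0 → b i * b i ∈ I := by
      intro y hy i hi
      have h := (hI y hy (b i)).1
      rw [hmul] at h
      exact (I.smul_mem_iff hi).1 h
    have hP : ∀ i j, edge i j → b i * b i ∈ I → b j * b j ∈ I :=
      fun i j hij hi => key _ hi j ((hedge i j).1 hij)
    obtain ⟨i, hi⟩ : ∃ i, b.repr x i ≠ 0 := by
      by_contra hcon
      push Not at hcon
      apply hx0
      apply b.repr.injective
      ext i
      simpa using hcon i
    have hlast := chain_last (P := fun i => b i * b i ∈ I) hP l hl hch'.tail i (hall i)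
      (key x hx i hi)
    have hsq : ∀ v, b v * b v ∈ I := fun v =>
      chain_forward (P := fun i => b i * b i ∈ I) hP l _ hch' hlast v (hall v)
    obtain ⟨N, hN⟩ := hperf.exists_right_inv
    rw [eq_top_iff, ← b.span_eq, Submodule.span_le]
    rintro _ ⟨j, rfl⟩
    have hj : b j = ∑ i, N i j • (b i * b i) := by
      apply b.repr.injective
      ext k
      have h := congrFun (congrFun hN k) j
      rw [Matrix.mul_apply] at h
      simp only [Matrix.of_apply, Matrix.one_apply] at h
      rw [b.repr_self, map_sum, Finsupp.finsetSum_apply, Finsupp.single_apply]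
      simp only [map_smul, Finsupp.smul_apply, smul_eq_mul]
      rw [show (if j = k then (1 : K) else 0) = if k = j then 1 else 0 by simp [eq_comm], ← h]
      exact Finset.sum_congr rfl fun i _ => mul_comm _ _
    rw [SetLike.mem_coe, hj]
    exact I.sum_mem fun i _ => I.smul_mem _ (hsq i)
end

section
/- Let A be a finite-dimensional perfect evolution algebra over a field K of dimension at least 2, with natural basis {e_i} and structure matrix (ω_ij). If ω_ij ≠ 0 for all i ≠ j, then A is a simple algebra. -/
/-- Let `A` be a finite-dimensional perfect evolution algebra over a field `K`
of dimension at least `2`, with natural basis `{e_i}` and structure matrix `(ω i j)` where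
`ω i j` is the `e_i`-coordinate of `e_j²`.  If `ω i j ≠ 0` for all `i ≠ j`, then `A` is a
simple algebra. -/
theorem simple_of_offdiagonal_nonzero {K A ι : Type*} [Field K]
    [NonUnitalNonAssocCommRing A] [Module K A] [SMulCommClass K A A] [IsScalarTower K A A]
    [Fintype ι] [DecidableEq ι] (hcard : 2 ≤ Fintype.card ι)
    (b : Module.Basis ι K A) (hnat : ∀ i j : ι, i ≠ j → b i * b j = 0)
    (hperf : IsUnit (Matrix.of fun i j : ι => b.repr (b j * b j) i))
    (hoff : ∀ i j : ι, i ≠ j → b.repr (b j * b j) i ≠ 0) :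
    (∃ x y : A, x * y ≠ 0) ∧
      ∀ I : Submodule K A, (∀ x ∈ I, ∀ a : A, a * x ∈ I ∧ x * a ∈ I) → I = ⊥ ∨ I = ⊤ := by
  have hmul : ∀ (i : ι) (x : A), b i * x = b.repr x i • (b i * b i) := by
    intro i x
    conv_lhs => rw [← b.sum_repr x]
    rw [Finset.mul_sum, Finset.sum_eq_single i]
    · rw [mul_smul_comm]
    · intro j _ hj
      rw [mul_smul_comm, hnat i j hj.symm, smul_zero]
    · intro h
      exact absurd (Finset.mem_univ i) h
  have hspan : Submodule.span K (Set.range fun j => b j * b j) = ⊤ := by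
    have h : IsUnit (b.det fun j => b j * b j) := by
      rw [Module.Basis.det_apply]
      exact (Matrix.isUnit_iff_isUnit_det _).1 hperf
    exact ((Module.Basis.is_basis_iff_det b).2 h).2
  constructor
  · obtain ⟨i, j, hij⟩ := Fintype.exists_pair_of_one_lt_card (α := ι) (by omega)
    refine ⟨b j, b j, fun h => hoff i j hij ?_⟩
    rw [h]
    simp
  · intro I hI
    by_cases hbot : I = ⊥
    · exact Or.inl hbot
    right
    obtain ⟨x, hx, hx0⟩ := Submodule.exists_mem_ne_zero_of_ne_bot hbot
    have key : ∀ (i : ι) (y : A), y ∈ I → b.repr y i ≠ 0 → b i * b i ∈ I := by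
      intro i y hy hne
      have h := (hI y hy (b i)).1
      rw [hmul] at h
      exact (I.smul_mem_iff hne).1 h
    obtain ⟨i, hi⟩ : ∃ i, b.repr x i ≠ 0 := by
      by_contra! hc
      exact hx0 (b.repr.map_eq_zero_iff.1 (Finsupp.ext hc))
    have hii := key i x hx hi
    rw [eq_top_iff, ← hspan, Submodule.span_le]
    rintro _ ⟨k, rfl⟩
    by_cases hk : k = i
    · subst hk
      exact hii
    · exact key k _ hii (hoff k i hk)
end

section
/- Let A be a two-dimensional simple evolution algebra over a field K. Then A has a natural basis {e₁, e₂} relative to which the structure matrix is one of the following three forms: (1) rows (0, λ) and (1, 0) with λ ∈ K^×; (2) rows (1, λ) and (1, 0) with λ ∈ K^×; (3) rows (1, λ) and (μ, 1) with λ, μ ∈ K^× and λμ ≠ 1. -/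
section Helpers

variable {K A : Type*} [Field K]
    [NonUnitalNonAssocCommRing A] [Module K A] [SMulCommClass K A A] [IsScalarTower K A A]

/-- A common eigenvector of the multiplications by the basis contradicts simplicity. -/
lemma no_common_eigenvector (b : Module.Basis (Fin 2) K A)
    (hI : ∀ I : Submodule K A, (∀ x ∈ I, ∀ a : A, a * x ∈ I ∧ x * a ∈ I) → I = ⊥ ∨ I = ⊤)
    (v : A) (hv : v ≠ 0) (s t : K) (h0 : b 0 * v = s • v) (h1 : b 1 * v = t • v) : False := by
  have key : ∀ a : A, a * v ∈ Submodule.span K {v} := by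
    intro a
    rw [← b.sum_repr a, Fin.sum_univ_two, add_mul, smul_mul_assoc, smul_mul_assoc, h0, h1]
    have hm := Submodule.mem_span_singleton_self (R := K) v
    exact add_mem (Submodule.smul_mem _ _ (Submodule.smul_mem _ _ hm))
      (Submodule.smul_mem _ _ (Submodule.smul_mem _ _ hm))
  rcases hI (Submodule.span K {v}) (by
    intro x hx a
    obtain ⟨k, rfl⟩ := Submodule.mem_span_singleton.1 hx
    have h : a * k • v ∈ Submodule.span K {v} := by
      rw [mul_smul_comm]
      exact Submodule.smul_mem _ _ (key a)
    exact ⟨h, by rw [mul_comm]; exact h⟩) with h | h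
  · exact hv (Submodule.span_singleton_eq_bot.1 h)
  · have h2 : Module.finrank K A = 2 := by
      simpa using Module.finrank_eq_card_basis b
    have h3 := finrank_span_singleton (K := K) hv
    rw [h, finrank_top] at h3
    omega

/-- Rescaling of a basis with two elements. -/
lemma exists_scaled (b : Module.Basis (Fin 2) K A) (u w : K) (hu : u ≠ 0) (hw : w ≠ 0) :
    ∃ e : Module.Basis (Fin 2) K A, e 0 = u • b 0 ∧ e 1 = w • b 1 := by
  refine ⟨b.unitsSMul ![Units.mk0 u hu, Units.mk0 w hw], ?_, ?_⟩ <;>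
    simp [Module.Basis.unitsSMul_apply, Units.smul_def]

lemma natural_of (e : Module.Basis (Fin 2) K A) (h : e 0 * e 1 = 0) :
    ∀ i j : Fin 2, i ≠ j → e i * e j = 0 := by
  intro i j hij
  fin_cases i <;> fin_cases j
  · exact absurd rfl hij
  · exact h
  · exact (mul_comm _ _).trans h
  · exact absurd rfl hij

/-- The case of one vanishing diagonal entry. -/
lemma one_diag (b : Module.Basis (Fin 2) K A) (h01 : b 0 * b 1 = 0) (a c p : K)
    (ha : a ≠ 0) (hc : c ≠ 0) (hp : p ≠ 0)
    (h0 : b 0 * b 0 = a • b 0 + c • b 1) (h1 : b 1 * b 1 = p • b 0) :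
    ∃ e : Module.Basis (Fin 2) K A, (∀ i j : Fin 2, i ≠ j → e i * e j = 0) ∧
      (∃ lam : K, lam ≠ 0 ∧ e 0 * e 0 = e 0 + e 1 ∧ e 1 * e 1 = lam • e 0) := by
  obtain ⟨e, e0, e1⟩ := exists_scaled b a⁻¹ (c / a ^ 2) (by simp [ha, hc, hp]) (by simp [ha, hc, hp])
  refine ⟨e, natural_of e (by rw [e0, e1, smul_mul_smul_comm, h01, smul_zero]),
    c ^ 2 * p / a ^ 3, by simp [ha, hc, hp], ?_, ?_⟩
  · rw [e0, e1, smul_mul_smul_comm, h0]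
    match_scalars <;> field_simp
  · rw [e0, e1, smul_mul_smul_comm, h1]
    match_scalars; field_simp

end Helpers

/-- Let `A` be a two-dimensional simple evolution algebra over a field `K`
(it has a natural basis indexed by `Fin 2`).  Then `A` has a natural basis `{e₁, e₂}` relative
to which the structure matrix is one of: rows `(0, λ), (1, 0)`; rows `(1, λ), (1, 0)`;
rows `(1, λ), (μ, 1)` with `λ, μ ∈ K^×` and `λμ ≠ 1` (the `i`-th column of the structure
matrix holds the coordinates of `e_i²`). -/
theorem two_dim_simple_classification {K A : Type*} [Field K]
    [NonUnitalNonAssocCommRing A] [Module K A] [SMulCommClass K A A] [IsScalarTower K A A]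
    (hB : ∃ b : Module.Basis (Fin 2) K A, ∀ i j : Fin 2, i ≠ j → b i * b j = 0)
    (hsimple : (∃ x y : A, x * y ≠ 0) ∧
      ∀ I : Submodule K A, (∀ x ∈ I, ∀ a : A, a * x ∈ I ∧ x * a ∈ I) → I = ⊥ ∨ I = ⊤) :
    ∃ e : Module.Basis (Fin 2) K A, (∀ i j : Fin 2, i ≠ j → e i * e j = 0) ∧
      ((∃ lam : K, lam ≠ 0 ∧ e 0 * e 0 = e 1 ∧ e 1 * e 1 = lam • e 0) ∨
       (∃ lam : K, lam ≠ 0 ∧ e 0 * e 0 = e 0 + e 1 ∧ e 1 * e 1 = lam • e 0) ∨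
       (∃ lam mu : K, lam ≠ 0 ∧ mu ≠ 0 ∧ lam * mu ≠ 1 ∧
          e 0 * e 0 = e 0 + mu • e 1 ∧ e 1 * e 1 = lam • e 0 + e 1)) := by
  obtain ⟨b, hb⟩ := hB
  obtain ⟨-, hI⟩ := hsimple
  have h01 : b 0 * b 1 = 0 := hb 0 1 (by decide)
  have h10 : b 1 * b 0 = 0 := hb 1 0 (by decide)
  obtain ⟨a, c, h0⟩ : ∃ a c : K, b 0 * b 0 = a • b 0 + c • b 1 :=
    ⟨_, _, by rw [← Fin.sum_univ_two (fun i => b.repr (b 0 * b 0) i • b i), b.sum_repr]⟩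
  obtain ⟨p, q, h1⟩ : ∃ p q : K, b 1 * b 1 = p • b 0 + q • b 1 :=
    ⟨_, _, by rw [← Fin.sum_univ_two (fun i => b.repr (b 1 * b 1) i • b i), b.sum_repr]⟩
  have hc : c ≠ 0 := by
    rintro rfl
    exact no_common_eigenvector b hI (b 0) (b.ne_zero 0) a 0 (by simpa using h0) (by simpa using h10)
  have hp : p ≠ 0 := by
    rintro rfl
    exact no_common_eigenvector b hI (b 1) (b.ne_zero 1) 0 q (by simpa using h01) (by simpa using h1)
  have hd : p * c ≠ a * q := by
    intro hd
    refine no_common_eigenvector b hI (a • b 0 + c • b 1) ?_ a q ?_ ?_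
    · intro h
      have := congrArg (fun x => b.repr x 1) h
      simp at this
      exact hc this
    · rw [mul_add, mul_smul_comm, mul_smul_comm, h01, h0, smul_zero, add_zero]
    · rw [mul_add, mul_smul_comm, mul_smul_comm, h10, h1, smul_zero, zero_add]
      match_scalars
      · linear_combination hd
      · ring
  by_cases ha : a = 0
  · subst ha
    by_cases hq : q = 0
    · subst hq
      obtain ⟨e, e0, e1⟩ := exists_scaled b 1 c one_ne_zero hc
      refine ⟨e, natural_of e (by rw [e0, e1, smul_mul_smul_comm, h01, smul_zero]),
        Or.inl ⟨c ^ 2 * p, by simp [hc, hp], ?_, ?_⟩⟩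
      · rw [e0, e1, smul_mul_smul_comm, h0]
        simp
      · rw [e0, e1, smul_mul_smul_comm, h1]
        match_scalars <;> ring
    · obtain ⟨e, he, h⟩ := one_diag (b.reindex (Equiv.swap 0 1)) (by simpa using h10) q p c hq hp hc
        (by simpa [add_comm] using h1) (by simpa using h0)
      exact ⟨e, he, Or.inr (Or.inl h)⟩
  · by_cases hq : q = 0
    · subst hq
      obtain ⟨e, he, h⟩ := one_diag b h01 a c p ha hc hp h0 (by simpa using h1)
      exact ⟨e, he, Or.inr (Or.inl h)⟩
    · obtain ⟨e, e0, e1⟩ := exists_scaled b a⁻¹ q⁻¹ (by simp [ha]) (by simp [hq])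
      refine ⟨e, natural_of e (by rw [e0, e1, smul_mul_smul_comm, h01, smul_zero]),
        Or.inr (Or.inr ⟨p * a / q ^ 2, c * q / a ^ 2, by simp [ha, hp, hq], by simp [ha, hc, hq],
          ?_, ?_, ?_⟩)⟩
      · intro h
        apply hd
        field_simp at h
        linear_combination h
      · rw [e0, e1, smul_mul_smul_comm, h0]
        match_scalars <;> field_simp
      · rw [e0, e1, smul_mul_smul_comm, h1]
        match_scalars <;> field_simp
end

section
/- For λ ∈ K^×, let II⁰²_λ be the evolution algebra on K² with natural basis {e₁, e₂} and products e₁² = e₂, e₂² = λe₁, e₁e₂ = e₂e₁ = 0. Then for λ, μ ∈ K^×, the algebras II⁰²_λ and II⁰²_μ are isomorphic as K-algebras if and only if there exist k ∈ K^× and natural numbers r, s with μ^(2^r) = k³ λ^(2^s). -/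
theorem pow_two_pow_mod_cubes {K : Type*} [Field K] (x : K) (hx : x ≠ 0) (r : ℕ) :
    ∃ c : K, c ≠ 0 ∧ (x ^ 2 ^ r = c ^ 3 * x ∨ x ^ 2 ^ r = c ^ 3 * x ^ 2) := by
  induction r with
  | zero => exact ⟨1, one_ne_zero, Or.inl (by simp)⟩
  | succ n ih =>
    obtain ⟨c, hc, h | h⟩ := ih
    · refine ⟨c ^ 2, pow_ne_zero _ hc, Or.inr ?_⟩
      rw [pow_succ, pow_mul, h]; ring
    · refine ⟨c ^ 2 * x, mul_ne_zero (pow_ne_zero _ hc) hx, Or.inl ?_⟩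
      rw [pow_succ, pow_mul, h]; ring

theorem cube_reduction {K : Type*} [Field K] (lam mu : K) (hlam : lam ≠ 0) (hmu : mu ≠ 0)
    (h : ∃ (k : K) (r s : ℕ), k ≠ 0 ∧ mu ^ 2 ^ r = k ^ 3 * lam ^ 2 ^ s) :
    ∃ a : K, a ≠ 0 ∧ (a ^ 3 * mu = lam ∨ a ^ 3 * mu ^ 2 = lam) := by
  obtain ⟨k, r, s, hk, h⟩ := h
  obtain ⟨c, hc, hr⟩ := pow_two_pow_mod_cubes mu hmu r
  obtain ⟨d, hd, hs⟩ := pow_two_pow_mod_cubes lam hlam s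
  obtain ⟨t, ht, htd⟩ : ∃ t : K, t ≠ 0 ∧ t * (k * d) = c :=
    ⟨c / (k * d), by simp [*], by field_simp⟩
  have hkd : (k * d) ^ 3 ≠ 0 := by simp [*]
  subst htd
  rcases hr with hr | hr <;> rcases hs with hs | hs <;> rw [hr, hs] at h
  · refine ⟨t, ht, Or.inl (mul_left_cancel₀ hkd ?_)⟩
    linear_combination h
  · have h2 : t ^ 3 * mu = lam ^ 2 := mul_left_cancel₀ hkd (by linear_combination h)
    refine ⟨t ^ 2 / lam, by simp [*], Or.inr ?_⟩
    field_simp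
    linear_combination (t ^ 3 * mu + lam ^ 2) * h2
  · refine ⟨t, ht, Or.inr (mul_left_cancel₀ hkd ?_)⟩
    linear_combination h
  · have h2 : t ^ 3 * mu ^ 2 = lam ^ 2 := mul_left_cancel₀ hkd (by linear_combination h)
    refine ⟨t ^ 2 * mu / lam, by simp [*], Or.inl ?_⟩
    field_simp
    linear_combination (t ^ 3 * mu ^ 2 + lam ^ 2) * h2

theorem map_mul_of_basis {K A B : Type*} [Field K]
    [NonUnitalNonAssocCommRing A] [Module K A] [SMulCommClass K A A] [IsScalarTower K A A]
    [NonUnitalNonAssocCommRing B] [Module K B] [SMulCommClass K B B] [IsScalarTower K B B]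
    (e : Module.Basis (Fin 2) K A) (φ : A ≃ₗ[K] B)
    (h : ∀ i j, φ (e i * e j) = φ (e i) * φ (e j)) (x y : A) : φ (x * y) = φ x * φ y := by
  have hh : (LinearMap.mul K A).compr₂ φ.toLinearMap
      = (LinearMap.mul K B).compl₁₂ φ.toLinearMap φ.toLinearMap :=
    e.ext fun i => e.ext fun j => by simpa using h i j
  simpa using LinearMap.congr_fun₂ hh x y

/-- For `λ ∈ K^×`, `II⁰²_λ` is the evolution algebra with natural basis
`{e₁, e₂}` and products `e₁² = e₂`, `e₂² = λ e₁`, `e₁e₂ = e₂e₁ = 0`.  For `λ, μ ∈ K^×`,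
`II⁰²_λ ≅ II⁰²_μ` as `K`-algebras iff there are `k ∈ K^×` and naturals `r, s` with
`μ^(2^r) = k³ λ^(2^s)`. -/
theorem II02_iso_iff {K A B : Type*} [Field K]
    [NonUnitalNonAssocCommRing A] [Module K A] [SMulCommClass K A A] [IsScalarTower K A A]
    [NonUnitalNonAssocCommRing B] [Module K B] [SMulCommClass K B B] [IsScalarTower K B B]
    (lam mu : K) (hlam : lam ≠ 0) (hmu : mu ≠ 0)
    (e : Module.Basis (Fin 2) K A) (hen : ∀ i j : Fin 2, i ≠ j → e i * e j = 0)
    (he0 : e 0 * e 0 = e 1) (he1 : e 1 * e 1 = lam • e 0)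
    (f : Module.Basis (Fin 2) K B) (hfn : ∀ i j : Fin 2, i ≠ j → f i * f j = 0)
    (hf0 : f 0 * f 0 = f 1) (hf1 : f 1 * f 1 = mu • f 0) :
    (∃ φ : A ≃ₗ[K] B, ∀ x y : A, φ (x * y) = φ x * φ y) ↔
      ∃ (k : K) (r s : ℕ), k ≠ 0 ∧ mu ^ 2 ^ r = k ^ 3 * lam ^ 2 ^ s := by
  have hf01 : f 0 * f 1 = 0 := hfn 0 1 (by decide)
  have hf10 : f 1 * f 0 = 0 := hfn 1 0 (by decide)
  have he01 : e 0 * e 1 = 0 := hen 0 1 (by decide)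
  have he10 : e 1 * e 0 = 0 := hen 1 0 (by decide)
  constructor
  · rintro ⟨φ, hφ⟩
    obtain ⟨a, b, h0⟩ : ∃ a b : K, φ (e 0) = a • f 0 + b • f 1 :=
      ⟨f.repr (φ (e 0)) 0, f.repr (φ (e 0)) 1, by
        rw [← Fin.sum_univ_two (fun i => f.repr (φ (e 0)) i • f i), f.sum_repr]⟩
    have key : ∀ p q p' q' : K, p • f 0 + q • f 1 = p' • f 0 + q' • f 1 → p = p' ∧ q = q' := by
      intro p q p' q' h
      have h' := congrArg f.repr h
      exact ⟨by simpa using DFunLike.congr_fun h' 0, by simpa using DFunLike.congr_fun h' 1⟩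
    have h1 : φ (e 1) = (b ^ 2 * mu) • f 0 + a ^ 2 • f 1 := by
      rw [← he0, hφ, h0]
      simp only [mul_add, add_mul, smul_mul_assoc, mul_smul_comm, hf0, hf1, hf01, hf10]
      module
    have h01 := hφ (e 0) (e 1)
    rw [he01, map_zero, h0, h1] at h01
    simp only [mul_add, add_mul, smul_mul_assoc, mul_smul_comm, hf0, hf1, hf01, hf10] at h01
    have k1 := key 0 0 (a ^ 2 * b * mu) (a * (b ^ 2 * mu)) (by
      trans (0 : B)
      · module
      · rw [h01]; module)
    have h11 := hφ (e 1) (e 1)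
    rw [he1, map_smul, h0, h1] at h11
    simp only [mul_add, add_mul, smul_mul_assoc, mul_smul_comm, hf0, hf1, hf01, hf10] at h11
    have k2 := key (lam * a) (lam * b) (a ^ 4 * mu) (b ^ 4 * mu ^ 2) (by
      trans lam • (a • f 0 + b • f 1)
      · module
      · rw [h11]; module)
    have hne : ¬ (a = 0 ∧ b = 0) := by
      rintro ⟨rfl, rfl⟩
      have : φ (e 0) = 0 := by rw [h0]; module
      exact e.ne_zero 0 (by simpa using this)
    by_cases ha : a = 0
    · have hb : b ≠ 0 := fun hb => hne ⟨ha, hb⟩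
      have h3 : lam = b ^ 3 * mu ^ 2 := mul_right_cancel₀ hb (by linear_combination k2.2)
      refine ⟨b⁻¹, 1, 0, inv_ne_zero hb, ?_⟩
      rw [h3]; field_simp; ring
    · have h3 : lam = a ^ 3 * mu := mul_right_cancel₀ ha (by linear_combination k2.1)
      refine ⟨a⁻¹, 0, 0, inv_ne_zero ha, ?_⟩
      rw [h3]; field_simp; ring
  · intro h
    obtain ⟨a, ha, h | h⟩ := cube_reduction lam mu hlam hmu h
    · let φ : A ≃ₗ[K] B := e.equiv
        (f.unitsSMul ![Units.mk0 a ha, Units.mk0 (a ^ 2) (pow_ne_zero _ ha)]) (Equiv.refl _)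
      have p0 : φ (e 0) = a • f 0 := by
        simp [φ, Module.Basis.unitsSMul_apply, Units.smul_def]
      have p1 : φ (e 1) = a ^ 2 • f 1 := by
        simp [φ, Module.Basis.unitsSMul_apply, Units.smul_def]
      refine ⟨φ, map_mul_of_basis e φ ?_⟩
      intro i j
      fin_cases i <;> fin_cases j <;>
        simp only [Fin.zero_eta, Fin.mk_one, he0, he1, he01, he10, map_zero, map_smul, p0, p1,
          smul_mul_assoc, mul_smul_comm, hf0, hf1, hf01, hf10, smul_zero, ← h] <;> module
    · let φ : A ≃ₗ[K] B := e.equiv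
        (f.unitsSMul ![Units.mk0 (a ^ 2 * mu) (mul_ne_zero (pow_ne_zero _ ha) hmu),
          Units.mk0 a ha]) (Equiv.swap 0 1)
      have p0 : φ (e 0) = a • f 1 := by
        simp [φ, Module.Basis.unitsSMul_apply, Units.smul_def]
      have p1 : φ (e 1) = (a ^ 2 * mu) • f 0 := by
        simp [φ, Module.Basis.unitsSMul_apply, Units.smul_def]
      refine ⟨φ, map_mul_of_basis e φ ?_⟩
      intro i j
      fin_cases i <;> fin_cases j <;>
        simp only [Fin.zero_eta, Fin.mk_one, he0, he1, he01, he10, map_zero, map_smul, p0, p1,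
          smul_mul_assoc, mul_smul_comm, hf0, hf1, hf01, hf10, smul_zero, ← h] <;> module
end

section
/- For λ ∈ K^×, let II¹³_λ be the evolution algebra on K² with natural basis {e₁, e₂} and products e₁² = e₁ + e₂, e₂² = λe₁, e₁e₂ = e₂e₁ = 0. Then for λ, μ ∈ K^×, the algebras II¹³_λ and II¹³_μ are isomorphic as K-algebras if and only if λ = μ. -/
/-- For `λ ∈ K^×`, `II¹³_λ` is the evolution algebra with natural basis
`{e₁, e₂}` and products `e₁² = e₁ + e₂`, `e₂² = λ e₁`, `e₁e₂ = e₂e₁ = 0`.  For `λ, μ ∈ K^×`,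
`II¹³_λ ≅ II¹³_μ` as `K`-algebras iff `λ = μ`. -/
theorem II13_iso_iff {K A B : Type*} [Field K]
    [NonUnitalNonAssocCommRing A] [Module K A] [SMulCommClass K A A] [IsScalarTower K A A]
    [NonUnitalNonAssocCommRing B] [Module K B] [SMulCommClass K B B] [IsScalarTower K B B]
    (lam mu : K) (hlam : lam ≠ 0) (hmu : mu ≠ 0)
    (e : Module.Basis (Fin 2) K A) (hen : ∀ i j : Fin 2, i ≠ j → e i * e j = 0)
    (he0 : e 0 * e 0 = e 0 + e 1) (he1 : e 1 * e 1 = lam • e 0)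
    (f : Module.Basis (Fin 2) K B) (hfn : ∀ i j : Fin 2, i ≠ j → f i * f j = 0)
    (hf0 : f 0 * f 0 = f 0 + f 1) (hf1 : f 1 * f 1 = mu • f 0) :
    (∃ φ : A ≃ₗ[K] B, ∀ x y : A, φ (x * y) = φ x * φ y) ↔ lam = mu := by
  have hf01 : f 0 * f 1 = 0 := hfn 0 1 (by decide)
  have hf10 : f 1 * f 0 = 0 := hfn 1 0 (by decide)
  have he01 : e 0 * e 1 = 0 := hen 0 1 (by decide)
  have he10 : e 1 * e 0 = 0 := hen 1 0 (by decide)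
  have mulf : ∀ a b c d : K, (a • f 0 + b • f 1) * (c • f 0 + d • f 1)
      = (a * c + b * d * mu) • f 0 + (a * c) • f 1 := by
    intro a b c d
    simp only [add_mul, mul_add, smul_mul_assoc, mul_smul_comm, hf0, hf1, hf01, hf10, smul_zero]
    module
  have mule : ∀ a b c d : K, (a • e 0 + b • e 1) * (c • e 0 + d • e 1)
      = (a * c + b * d * lam) • e 0 + (a * c) • e 1 := by
    intro a b c d
    simp only [add_mul, mul_add, smul_mul_assoc, mul_smul_comm, he0, he1, he01, he10, smul_zero]
    module
  have repf : ∀ y : B, ∃ a b : K, y = a • f 0 + b • f 1 := fun y =>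
    ⟨f.repr y 0, f.repr y 1, by rw [← Fin.sum_univ_two (fun i => f.repr y i • f i), f.sum_repr]⟩
  have repe : ∀ y : A, ∃ a b : K, y = a • e 0 + b • e 1 := fun y =>
    ⟨e.repr y 0, e.repr y 1, by rw [← Fin.sum_univ_two (fun i => e.repr y i • e i), e.sum_repr]⟩
  have injf : ∀ a b c d : K, a • f 0 + b • f 1 = c • f 0 + d • f 1 → a = c ∧ b = d := by
    intro a b c d h
    have h0 := congrArg (fun y => f.repr y 0) h
    have h1 := congrArg (fun y => f.repr y 1) h
    simp at h0 h1
    exact ⟨h0, h1⟩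
  constructor
  · rintro ⟨φ, hφ⟩
    obtain ⟨a, b, hab⟩ := repf (φ (e 0))
    obtain ⟨c, d, hcd⟩ := repf (φ (e 1))
    have h01 := hφ (e 0) (e 1)
    rw [he01, map_zero, hab, hcd, mulf] at h01
    have h00 := hφ (e 0) (e 0)
    rw [he0, map_add, hab, hcd, mulf] at h00
    have h11 := hφ (e 1) (e 1)
    rw [he1, map_smul, hab, hcd, mulf] at h11
    obtain ⟨p1, p2⟩ := injf 0 0 _ _ (by simpa using h01)
    obtain ⟨q1, q2⟩ := injf (a + c) (b + d) _ _ (by rw [← h00]; module)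
    obtain ⟨r1, r2⟩ := injf (lam * a) (lam * b) _ _ (by rw [← h11]; module)
    have hne : ¬ (a = 0 ∧ b = 0) := by
      rintro ⟨rfl, rfl⟩
      apply e.ne_zero 0
      apply φ.injective
      simpa using hab
    have hbd : b * d = 0 := by
      have : b * d * mu = 0 := by rw [← p2] at p1; simpa using p1.symm
      exact (mul_eq_zero.mp this).resolve_right hmu
    have ha : a ≠ 0 := by
      rintro rfl
      have hb : b ≠ 0 := fun hb => hne ⟨rfl, hb⟩
      have hd : d = 0 := (mul_eq_zero.mp hbd).resolve_left hb
      subst hd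
      apply hb
      simpa using q2
    have hc : c = 0 := (mul_eq_zero.mp p2.symm).resolve_left ha
    subst hc
    have hb : b = 0 := by
      have : lam * b = 0 := by simpa using r2
      exact (mul_eq_zero.mp this).resolve_left hlam
    subst hb
    have ha1 : a = 1 := by
      apply mul_left_cancel₀ ha
      linear_combination -q1
    subst ha1
    have hd : d = 1 := by simpa using q2
    subst hd
    simpa using r1
  · rintro rfl
    refine ⟨e.equiv f (Equiv.refl _), fun x y => ?_⟩
    obtain ⟨a, b, rfl⟩ := repe x
    obtain ⟨c, d, rfl⟩ := repe y
    rw [mule]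
    simp only [map_add, map_smul, Module.Basis.equiv_apply, Equiv.refl_apply]
    rw [mulf]
end

section
/- For λ, μ ∈ K^× with λμ ≠ 1, let II²⁴_{λ,μ} be the evolution algebra on K² with natural basis {e₁, e₂} and products e₁² = e₁ + μe₂, e₂² = λe₁ + e₂, e₁e₂ = e₂e₁ = 0. Then for λ, μ, λ', μ' ∈ K^× with λμ ≠ 1 and λ'μ' ≠ 1, the algebras II²⁴_{λ,μ} and II²⁴_{λ',μ'} are isomorphic as K-algebras if and only if (λ', μ') = (λ, μ) or (λ', μ') = (μ, λ). -/
theorem mul_formula_aux {K B : Type*} [Field K]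
    [NonUnitalNonAssocCommRing B] [Module K B] [SMulCommClass K B B] [IsScalarTower K B B]
    (lam mu : K) (u v : B) (huv : u * v = 0)
    (hu : u * u = u + mu • v) (hv : v * v = lam • u + v) (a b c d : K) :
    (a • u + b • v) * (c • u + d • v)
      = (a * c + lam * (b * d)) • u + (mu * (a * c) + b * d) • v := by
  have hvu : v * u = 0 := by rw [mul_comm, huv]
  simp only [add_mul, mul_add, smul_mul_assoc, mul_smul_comm, huv, hvu, hu, hv]
  module

theorem iso_aux {K A B : Type*} [Field K]
    [NonUnitalNonAssocCommRing A] [Module K A] [SMulCommClass K A A] [IsScalarTower K A A]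
    [NonUnitalNonAssocCommRing B] [Module K B] [SMulCommClass K B B] [IsScalarTower K B B]
    (lam mu : K) (e : Module.Basis (Fin 2) K A) (he : e 0 * e 1 = 0)
    (he0 : e 0 * e 0 = e 0 + mu • e 1) (he1 : e 1 * e 1 = lam • e 0 + e 1)
    (φ : A ≃ₗ[K] B) (h : φ (e 0) * φ (e 1) = 0)
    (h0 : φ (e 0) * φ (e 0) = φ (e 0) + mu • φ (e 1))
    (h1 : φ (e 1) * φ (e 1) = lam • φ (e 0) + φ (e 1)) (x y : A) :
    φ (x * y) = φ x * φ y := by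
  rw [← e.sum_repr x, ← e.sum_repr y]
  simp only [Fin.sum_univ_two]
  rw [mul_formula_aux lam mu _ _ he he0 he1]
  simp only [map_add, map_smul]
  rw [mul_formula_aux lam mu _ _ h h0 h1]

theorem coord_aux {K B : Type*} [Field K] [AddCommGroup B] [Module K B]
    (f : Module.Basis (Fin 2) K B) {a b c d : K}
    (h : a • f 0 + b • f 1 = c • f 0 + d • f 1) : a = c ∧ b = d := by
  have h0 := congrArg (fun x => f.repr x 0) h
  have h1 := congrArg (fun x => f.repr x 1) h
  simp at h0 h1
  exact ⟨h0, h1⟩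

/-- For `λ, μ ∈ K^×` with `λμ ≠ 1`, `II²⁴_{λ,μ}` is the evolution algebra
with natural basis `{e₁, e₂}` and products `e₁² = e₁ + μe₂`, `e₂² = λe₁ + e₂`,
`e₁e₂ = e₂e₁ = 0`.  Then `II²⁴_{λ,μ} ≅ II²⁴_{λ',μ'}` as `K`-algebras iff
`(λ', μ') = (λ, μ)` or `(λ', μ') = (μ, λ)`. -/
theorem II24_iso_iff {K A B : Type*} [Field K]
    [NonUnitalNonAssocCommRing A] [Module K A] [SMulCommClass K A A] [IsScalarTower K A A]
    [NonUnitalNonAssocCommRing B] [Module K B] [SMulCommClass K B B] [IsScalarTower K B B]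
    (lam mu lam' mu' : K) (hlam : lam ≠ 0) (hmu : mu ≠ 0)
    (hlam' : lam' ≠ 0) (hmu' : mu' ≠ 0)
    (h1 : lam * mu ≠ 1) (h1' : lam' * mu' ≠ 1)
    (e : Module.Basis (Fin 2) K A) (hen : ∀ i j : Fin 2, i ≠ j → e i * e j = 0)
    (he0 : e 0 * e 0 = e 0 + mu • e 1) (he1 : e 1 * e 1 = lam • e 0 + e 1)
    (f : Module.Basis (Fin 2) K B) (hfn : ∀ i j : Fin 2, i ≠ j → f i * f j = 0)
    (hf0 : f 0 * f 0 = f 0 + mu' • f 1) (hf1 : f 1 * f 1 = lam' • f 0 + f 1) :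
    (∃ φ : A ≃ₗ[K] B, ∀ x y : A, φ (x * y) = φ x * φ y) ↔
      (lam' = lam ∧ mu' = mu) ∨ (lam' = mu ∧ mu' = lam) := by
  have he := hen 0 1 (by decide)
  have hf := hfn 0 1 (by decide)
  have hf' := hfn 1 0 (by decide)
  constructor
  · rintro ⟨φ, hφ⟩
    obtain ⟨a, b, hab⟩ : ∃ a b : K, φ (e 0) = a • f 0 + b • f 1 :=
      ⟨_, _, by rw [← Fin.sum_univ_two (fun i => f.repr (φ (e 0)) i • f i), f.sum_repr]⟩
    obtain ⟨c, d, hcd⟩ : ∃ c d : K, φ (e 1) = c • f 0 + d • f 1 :=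
      ⟨_, _, by rw [← Fin.sum_univ_two (fun i => f.repr (φ (e 1)) i • f i), f.sum_repr]⟩
    have n0 : ¬ (a = 0 ∧ b = 0) := by
      rintro ⟨rfl, rfl⟩
      exact e.ne_zero 0 (φ.map_eq_zero_iff.1 (by simpa using hab))
    have n1 : ¬ (c = 0 ∧ d = 0) := by
      rintro ⟨rfl, rfl⟩
      exact e.ne_zero 1 (φ.map_eq_zero_iff.1 (by simpa using hcd))
    have k := hφ (e 0) (e 1)
    have k0 := hφ (e 0) (e 0)
    have k1 := hφ (e 1) (e 1)
    rw [he, hab, hcd, mul_formula_aux lam' mu' _ _ hf hf0 hf1, map_zero] at k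
    rw [he0, map_add, map_smul, hab, hcd, mul_formula_aux lam' mu' _ _ hf hf0 hf1] at k0
    rw [he1, map_add, map_smul, hab, hcd, mul_formula_aux lam' mu' _ _ hf hf0 hf1] at k1
    obtain ⟨p, q⟩ := coord_aux f (a := 0) (b := 0) (by simpa using k)
    obtain ⟨p0, q0⟩ := coord_aux f (a := a + mu * c) (b := b + mu * d)
      (by rw [← k0]; module)
    obtain ⟨p1, q1⟩ := coord_aux f (a := lam * a + c) (b := lam * b + d)
      (by rw [← k1]; module)
    have hbd : b * d = 0 := by
      have : (1 - lam' * mu') * (b * d) = 0 := by linear_combination mu' * p - q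
      exact (mul_eq_zero.1 this).resolve_left (fun h => h1' (by linear_combination -h))
    have hac : a * c = 0 := by linear_combination -p - lam' * hbd
    rcases mul_eq_zero.1 hac with rfl | rfl
    · have hb : b ≠ 0 := fun h => n0 ⟨rfl, h⟩
      obtain rfl := (mul_eq_zero.1 hbd).resolve_left hb
      have hc : c ≠ 0 := fun h => n1 ⟨h, rfl⟩
      have b1 : b = 1 := mul_left_cancel₀ hb (by linear_combination -q0)
      have c1 : c = 1 := mul_left_cancel₀ hc (by linear_combination -p1)
      subst b1 c1
      right
      exact ⟨by linear_combination -p0, by linear_combination -q1⟩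
    · have hd : d ≠ 0 := fun h => n1 ⟨rfl, h⟩
      obtain rfl := (mul_eq_zero.1 hbd).resolve_right hd
      have ha : a ≠ 0 := fun h => n0 ⟨h, rfl⟩
      have a1 : a = 1 := mul_left_cancel₀ ha (by linear_combination -p0)
      have d1 : d = 1 := mul_left_cancel₀ hd (by linear_combination -q1)
      subst a1 d1
      left
      exact ⟨by linear_combination -p1, by linear_combination -q0⟩
  · rintro (⟨rfl, rfl⟩ | ⟨rfl, rfl⟩)
    · refine ⟨e.equiv f (Equiv.refl _), iso_aux _ _ e he he0 he1 _ ?_ ?_ ?_⟩ <;>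
        simp [hf, hf0, hf1]
    · refine ⟨e.equiv f (Equiv.swap 0 1), iso_aux _ _ e he he0 he1 _ ?_ ?_ ?_⟩ <;>
        simp [hf', hf0, hf1, add_comm]
end

section
/- For λ ∈ K^×, let III⁰³_λ be the evolution algebra on K³ with natural basis {e₁,e₂,e₃} and products e₁² = e₂, e₂² = e₃, e₃² = λe₁, e_i e_j = 0 for i ≠ j. Then for λ, μ ∈ K^×, the algebras III⁰³_λ and III⁰³_μ are isomorphic as K-algebras if and only if there exist k ∈ K^× and natural numbers r, s with λ^(2^r) = k⁷ μ^(2^s). -/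
theorem III03_aux_mul {K A B : Type*} [Field K]
    [NonUnitalNonAssocCommRing A] [Module K A] [SMulCommClass K A A] [IsScalarTower K A A]
    [NonUnitalNonAssocCommRing B] [Module K B] [SMulCommClass K B B] [IsScalarTower K B B]
    (lam : K)
    (e : Module.Basis (Fin 3) K A) (hen : ∀ i j : Fin 3, i ≠ j → e i * e j = 0)
    (he0 : e 0 * e 0 = e 1) (he1 : e 1 * e 1 = e 2) (he2 : e 2 * e 2 = lam • e 0)
    (f : Module.Basis (Fin 3) K B) (hfn : ∀ i j : Fin 3, i ≠ j → f i * f j = 0)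
    (hf0 : f 0 * f 0 = f 1) (hf1 : f 1 * f 1 = f 2) (hf2 : f 2 * f 2 = lam • f 0) :
    ∃ φ : A ≃ₗ[K] B, ∀ x y : A, φ (x * y) = φ x * φ y := by
  let φ : A ≃ₗ[K] B := e.equiv f (Equiv.refl _)
  have hφ : ∀ i, φ (e i) = f i := fun i => by simp [φ]
  refine ⟨φ, ?_⟩
  have h : (LinearMap.mul K A).compr₂ φ.toLinearMap
      = (LinearMap.mul K B).compl₁₂ φ.toLinearMap φ.toLinearMap := by
    refine e.ext fun i => e.ext fun j => ?_
    simp only [LinearMap.compr₂_apply, LinearMap.compl₁₂_apply, LinearMap.mul_apply',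
      LinearEquiv.coe_coe, hφ]
    by_cases hij : i = j
    · subst hij
      fin_cases i
      · simp [he0, hf0, hφ]
      · simp [he1, hf1, hφ]
      · simp [he2, hf2, hφ]
    · rw [hen i j hij, hfn i j hij, map_zero]
  intro x y
  exact LinearMap.congr_fun (LinearMap.congr_fun h x) y

theorem III03_aux_basis {K B : Type*} [Field K]
    [NonUnitalNonAssocCommRing B] [Module K B] [SMulCommClass K B B] [IsScalarTower K B B]
    (f : Module.Basis (Fin 3) K B) (hfn : ∀ i j : Fin 3, i ≠ j → f i * f j = 0)
    (σ : Equiv.Perm (Fin 3)) (w : Fin 3 → K) (hw : ∀ i, w i ≠ 0) :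
    ∃ g : Module.Basis (Fin 3) K B, (∀ i, g i = w i • f (σ i)) ∧
      ∀ i j : Fin 3, i ≠ j → g i * g j = 0 := by
  have hg : ∀ i, ((f.reindex σ.symm).unitsSMul fun i => Units.mk0 (w i) (hw i)) i
      = w i • f (σ i) := fun i => by
    simp [Module.Basis.unitsSMul_apply, Units.smul_def]
  refine ⟨_, hg, fun i j hij => ?_⟩
  rw [hg, hg, smul_mul_smul_comm, hfn _ _ (fun h => hij (σ.injective h)), smul_zero]

theorem III03_aux_red {K : Type*} [Field K] (mu : K) (hmu : mu ≠ 0) (n : ℕ) :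
    ∃ k : K, k ≠ 0 ∧ (mu ^ 2 ^ n = k ^ 7 * mu ∨ mu ^ 2 ^ n = k ^ 7 * mu ^ 2 ∨
      mu ^ 2 ^ n = k ^ 7 * mu ^ 4) := by
  induction n with
  | zero => exact ⟨1, one_ne_zero, Or.inl (by simp)⟩
  | succ n ih =>
    obtain ⟨k, hk, h⟩ := ih
    rw [pow_succ, pow_mul]
    rcases h with h | h | h <;> rw [h]
    · exact ⟨k ^ 2, pow_ne_zero _ hk, Or.inr (Or.inl (by ring))⟩
    · exact ⟨k ^ 2, pow_ne_zero _ hk, Or.inr (Or.inr (by ring))⟩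
    · exact ⟨k ^ 2 * mu, mul_ne_zero (pow_ne_zero _ hk) hmu, Or.inl (by ring)⟩

theorem III03_aux_red' {K : Type*} [Field K] (lam mu : K) (hlam : lam ≠ 0) (hmu : mu ≠ 0)
    (k : K) (r s : ℕ) (hk : k ≠ 0) (h : lam ^ 2 ^ r = k ^ 7 * mu ^ 2 ^ s) :
    ∃ k : K, k ≠ 0 ∧ (lam = k ^ 7 * mu ∨ lam = k ^ 7 * mu ^ 2 ∨ lam = k ^ 7 * mu ^ 4) := by
  obtain ⟨a, ha, h1⟩ := III03_aux_red lam hlam r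
  obtain ⟨b, hb, h2⟩ := III03_aux_red mu hmu s
  have key : ∀ c : K, c ≠ 0 → ∀ x y : K, x * c ^ 7 = y → x = c⁻¹ ^ 7 * y := by
    intro c hc x y hxy
    rw [← hxy]; field_simp
  have fin : ∀ c d : K, c ≠ 0 → d ≠ 0 → (lam * c ^ 7 = d ^ 7 * mu ∨ lam * c ^ 7 = d ^ 7 * mu ^ 2 ∨
      lam * c ^ 7 = d ^ 7 * mu ^ 4) → 
      ∃ k : K, k ≠ 0 ∧ (lam = k ^ 7 * mu ∨ lam = k ^ 7 * mu ^ 2 ∨ lam = k ^ 7 * mu ^ 4) := by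
    intro c d hc hd h
    refine ⟨c⁻¹ * d, mul_ne_zero (inv_ne_zero hc) hd, ?_⟩
    rcases h with h | h | h
    · left; rw [key c hc _ _ h]; ring
    · right; left; rw [key c hc _ _ h]; ring
    · right; right; rw [key c hc _ _ h]; ring
  rcases h1 with h1 | h1 | h1
  · refine fin a (k * b) ha (mul_ne_zero hk hb) ?_
    have h3 : lam * a ^ 7 = k ^ 7 * mu ^ 2 ^ s := by rw [← h, h1]; ring
    rw [h3]
    rcases h2 with h2 | h2 | h2 <;> rw [h2]
    · left; ring
    · right; left; ring
    · right; right; ring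
  · have h3 : lam * (lam * a ^ 4) ^ 7 = (k ^ 7 * mu ^ 2 ^ s) ^ 4 := by rw [← h, h1]; ring
    have hc : lam * a ^ 4 ≠ 0 := mul_ne_zero hlam (pow_ne_zero _ ha)
    rcases h2 with h2 | h2 | h2 <;> rw [h2] at h3
    · exact fin _ (k ^ 4 * b ^ 4) hc (by simp [hk, hb, hmu]) (Or.inr (Or.inr (by rw [h3]; ring)))
    · exact fin _ (k ^ 4 * b ^ 4 * mu) hc (by simp [hk, hb, hmu]) (Or.inl (by rw [h3]; ring))
    · exact fin _ (k ^ 4 * b ^ 4 * mu ^ 2) hc (by simp [hk, hb, hmu]) (Or.inr (Or.inl (by rw [h3]; ring)))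
  · have h3 : lam * (lam * a ^ 2) ^ 7 = (k ^ 7 * mu ^ 2 ^ s) ^ 2 := by rw [← h, h1]; ring
    have hc : lam * a ^ 2 ≠ 0 := mul_ne_zero hlam (pow_ne_zero _ ha)
    rcases h2 with h2 | h2 | h2 <;> rw [h2] at h3
    · exact fin _ (k ^ 2 * b ^ 2) hc (by simp [hk, hb, hmu]) (Or.inr (Or.inl (by rw [h3]; ring)))
    · exact fin _ (k ^ 2 * b ^ 2) hc (by simp [hk, hb, hmu]) (Or.inr (Or.inr (by rw [h3]; ring)))
    · exact fin _ (k ^ 2 * b ^ 2 * mu) hc (by simp [hk, hb, hmu]) (Or.inl (by rw [h3]; ring))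

/-- For `λ ∈ K^×`, `III⁰³_λ` is the evolution algebra with natural basis
`{e₁,e₂,e₃}` and products `e₁² = e₂`, `e₂² = e₃`, `e₃² = λe₁`, `e_i e_j = 0` for `i ≠ j`.
For `λ, μ ∈ K^×`, `III⁰³_λ ≅ III⁰³_μ` as `K`-algebras iff there are `k ∈ K^×` and naturals
`r, s` with `λ^(2^r) = k⁷ μ^(2^s)`. -/
theorem III03_iso_iff {K A B : Type*} [Field K]
    [NonUnitalNonAssocCommRing A] [Module K A] [SMulCommClass K A A] [IsScalarTower K A A]
    [NonUnitalNonAssocCommRing B] [Module K B] [SMulCommClass K B B] [IsScalarTower K B B]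
    (lam mu : K) (hlam : lam ≠ 0) (hmu : mu ≠ 0)
    (e : Module.Basis (Fin 3) K A) (hen : ∀ i j : Fin 3, i ≠ j → e i * e j = 0)
    (he0 : e 0 * e 0 = e 1) (he1 : e 1 * e 1 = e 2) (he2 : e 2 * e 2 = lam • e 0)
    (f : Module.Basis (Fin 3) K B) (hfn : ∀ i j : Fin 3, i ≠ j → f i * f j = 0)
    (hf0 : f 0 * f 0 = f 1) (hf1 : f 1 * f 1 = f 2) (hf2 : f 2 * f 2 = mu • f 0) :
    (∃ φ : A ≃ₗ[K] B, ∀ x y : A, φ (x * y) = φ x * φ y) ↔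
      ∃ (k : K) (r s : ℕ), k ≠ 0 ∧ lam ^ 2 ^ r = k ^ 7 * mu ^ 2 ^ s := by
  constructor
  · rintro ⟨φ, hφ⟩
    obtain ⟨c, hc⟩ : ∃ c : Fin 3 → K, φ (e 0) = c 0 • f 0 + c 1 • f 1 + c 2 • f 2 :=
      ⟨fun i => f.repr (φ (e 0)) i, by
        have h := f.sum_repr (φ (e 0))
        rw [Fin.sum_univ_three] at h
        exact h.symm⟩
    obtain ⟨a, ha⟩ : ∃ a, a = c 0 := ⟨_, rfl⟩
    obtain ⟨b, hb⟩ : ∃ a, a = c 1 := ⟨_, rfl⟩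
    obtain ⟨d, hd⟩ : ∃ a, a = c 2 := ⟨_, rfl⟩
    rw [← ha, ← hb, ← hd] at hc
    have h01 := hfn 0 1 (by decide)
    have h02 := hfn 0 2 (by decide)
    have h12 := hfn 1 2 (by decide)
    have h10 := hfn 1 0 (by decide)
    have h20 := hfn 2 0 (by decide)
    have h21 := hfn 2 1 (by decide)
    have mulf : ∀ x y z x' y' z' : K,
        (x • f 0 + y • f 1 + z • f 2) * (x' • f 0 + y' • f 1 + z' • f 2)
          = (z * z' * mu) • f 0 + (x * x') • f 1 + (y * y') • f 2 := by
      intro x y z x' y' z'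
      simp only [mul_add, add_mul, smul_mul_smul_comm, h01, h02, h12, h10, h20, h21, hf0, hf1, hf2,
        smul_zero, add_zero, zero_add, smul_smul]
      abel
    have coef : ∀ x y z x' y' z' : K,
        x • f 0 + y • f 1 + z • f 2 = x' • f 0 + y' • f 1 + z' • f 2 →
        x = x' ∧ y = y' ∧ z = z' := by
      intro x y z x' y' z' h
      have h' := congrArg (fun v => f.repr v) h
      refine ⟨?_, ?_, ?_⟩
      · simpa [Finsupp.single_apply] using DFunLike.congr_fun h' 0
      · simpa [Finsupp.single_apply] using DFunLike.congr_fun h' 1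
      · simpa [Finsupp.single_apply] using DFunLike.congr_fun h' 2
    have e1 := hφ (e 0) (e 0)
    rw [he0, hc, mulf] at e1
    have e2 := hφ (e 1) (e 1)
    rw [he1, e1, mulf] at e2
    have e3 := hφ (e 2) (e 2)
    rw [he2, e2, mulf, map_smul, hc] at e3
    simp only [smul_add, smul_smul] at e3
    have e4 := hφ (e 0) (e 1)
    rw [hen 0 1 (by decide), hc, e1, mulf, map_zero] at e4
    obtain ⟨q1, q2, q3⟩ := coef _ _ _ _ _ _ e3
    obtain ⟨p1, p2, p3⟩ := coef 0 0 0 _ _ _ (by simpa using e4)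
    have hne : ¬ (a = 0 ∧ b = 0 ∧ d = 0) := by
      rintro ⟨rfl, rfl, rfl⟩
      simp at hc
      exact e.ne_zero 0 hc
    by_cases ha0 : a = 0
    · by_cases hb0 : b = 0
      · have hd0 : d ≠ 0 := fun h => hne ⟨ha0, hb0, h⟩
        refine ⟨d, 0, 2, hd0, mul_right_cancel₀ hd0 ?_⟩
        linear_combination q3
      · have hd0 : d = 0 := by grind
        refine ⟨b, 0, 1, hb0, mul_right_cancel₀ hb0 ?_⟩
        linear_combination q2
    · have hd0 : d = 0 := by grind
      have hb0 : b = 0 := by grind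
      refine ⟨a, 0, 0, ha0, mul_right_cancel₀ ha0 ?_⟩
      linear_combination q1
  · rintro ⟨k, r, s, hk, h⟩
    obtain ⟨k, hk, h⟩ := III03_aux_red' lam mu hlam hmu k r s hk h
    rcases h with h | h | h
    · obtain ⟨g, hg, hgn⟩ := III03_aux_basis f hfn (Equiv.refl _) ![k, k ^ 2, k ^ 4]
        (by intro i; fin_cases i <;> simp [hk])
      refine III03_aux_mul lam e hen he0 he1 he2 g hgn ?_ ?_ ?_ <;>
        simp only [hg, smul_mul_smul_comm] <;> simp [hf0, hf1, hf2, smul_smul, h] <;> ring_nf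
    · obtain ⟨g, hg, hgn⟩ := III03_aux_basis f hfn (finRotate 3) ![k, k ^ 2, k ^ 4 * mu]
        (by intro i; fin_cases i <;> simp [hk, hmu])
      have r0 : finRotate 3 0 = 1 := by decide
      have r1 : finRotate 3 1 = 2 := by decide
      have r2 : finRotate 3 2 = 0 := by decide
      refine III03_aux_mul lam e hen he0 he1 he2 g hgn ?_ ?_ ?_ <;>
        simp only [hg, smul_mul_smul_comm, r0, r1, r2] <;>
        simp [hf0, hf1, hf2, smul_smul, h] <;> ring_nf
    · obtain ⟨g, hg, hgn⟩ := III03_aux_basis f hfn (finRotate 3).symm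
        ![k, k ^ 2 * mu, k ^ 4 * mu ^ 2]
        (by intro i; fin_cases i <;> simp [hk, hmu])
      have r0 : (finRotate 3).symm 0 = 2 := by decide
      have r1 : (finRotate 3).symm 1 = 0 := by decide
      have r2 : (finRotate 3).symm 2 = 1 := by decide
      refine III03_aux_mul lam e hen he0 he1 he2 g hgn ?_ ?_ ?_ <;>
        simp only [hg, smul_mul_smul_comm, r0, r1, r2] <;>
        simp [hf0, hf1, hf2, smul_smul, h] <;> ring_nf
end

section
/- For λ, μ ∈ K^×, let III⁰⁴_{λ,μ} be the evolution algebra on K³ with natural basis {e₁,e₂,e₃} and products e₁² = e₂, e₂² = λe₁, e₃² = μe₁, e_i e_j = 0 for i ≠ j (structure matrix with rows (0,λ,μ),(1,0,0),(0,1,0)). Then for λ, μ, λ', μ' ∈ K^×, the algebras III⁰⁴_{λ,μ} and III⁰⁴_{λ',μ'} are isomorphic as K-algebras if and only if there exists k ∈ K^× with λ' = k³λ and μ' = k⁷μ. -/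
theorem III04_aux_mul {K B : Type*} [Field K]
    [NonUnitalNonAssocCommRing B] [Module K B] [SMulCommClass K B B] [IsScalarTower K B B]
    (l m : K) (f : Fin 3 → B) (hfn : ∀ i j : Fin 3, i ≠ j → f i * f j = 0)
    (hf0 : f 0 * f 0 = f 1) (hf1 : f 1 * f 1 = l • f 0 + f 2)
    (hf2 : f 2 * f 2 = m • f 0) (x0 x1 x2 y0 y1 y2 : K) :
    (x0 • f 0 + x1 • f 1 + x2 • f 2) * (y0 • f 0 + y1 • f 1 + y2 • f 2) =
      (l * (x1 * y1) + m * (x2 * y2)) • f 0 + (x0 * y0) • f 1 + (x1 * y1) • f 2 := by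
  simp only [add_mul, mul_add, smul_mul_assoc, mul_smul_comm, hf0, hf1, hf2,
    hfn 0 1 (by decide), hfn 0 2 (by decide), hfn 1 0 (by decide), hfn 1 2 (by decide),
    hfn 2 0 (by decide), hfn 2 1 (by decide)]
  module

theorem III04_aux_zero {K B : Type*} [Field K] [AddCommGroup B] [Module K B]
    (f : Module.Basis (Fin 3) K B) (x0 x1 x2 : K)
    (h : x0 • f 0 + x1 • f 1 + x2 • f 2 = 0) : x0 = 0 ∧ x1 = 0 ∧ x2 = 0 := by
  have := Fintype.linearIndependent_iff.1 f.linearIndependent ![x0, x1, x2]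
    (by simpa [Fin.sum_univ_three] using h)
  exact ⟨this 0, this 1, this 2⟩

theorem III04_aux_repr {K B : Type*} [Field K] [AddCommGroup B] [Module K B]
    (f : Module.Basis (Fin 3) K B) (x : B) :
    ∃ x0 x1 x2 : K, x = x0 • f 0 + x1 • f 1 + x2 • f 2 :=
  ⟨f.repr x 0, f.repr x 1, f.repr x 2, by
    conv_lhs => rw [← f.sum_repr x, Fin.sum_univ_three]⟩

/-- For `λ, μ ∈ K^×`, `III⁰⁴_{λ,μ}` is the evolution algebra with natural
basis `{e₁,e₂,e₃}` and structure matrix with rows `(0,λ,μ),(1,0,0),(0,1,0)` (the `i`-th column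
holds the coordinates of `e_i²`), i.e. `e₁² = e₂`, `e₂² = λe₁ + e₃`, `e₃² = μe₁`, and
`e_i e_j = 0` for `i ≠ j`.  Then `III⁰⁴_{λ,μ} ≅ III⁰⁴_{λ',μ'}` as `K`-algebras iff there is
`k ∈ K^×` with `λ' = k³λ` and `μ' = k⁷μ`. -/
theorem III04_iso_iff {K A B : Type*} [Field K]
    [NonUnitalNonAssocCommRing A] [Module K A] [SMulCommClass K A A] [IsScalarTower K A A]
    [NonUnitalNonAssocCommRing B] [Module K B] [SMulCommClass K B B] [IsScalarTower K B B]
    (lam mu lam' mu' : K) (hlam : lam ≠ 0) (hmu : mu ≠ 0)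
    (hlam' : lam' ≠ 0) (hmu' : mu' ≠ 0)
    (e : Module.Basis (Fin 3) K A) (hen : ∀ i j : Fin 3, i ≠ j → e i * e j = 0)
    (he0 : e 0 * e 0 = e 1) (he1 : e 1 * e 1 = lam • e 0 + e 2)
    (he2 : e 2 * e 2 = mu • e 0)
    (f : Module.Basis (Fin 3) K B) (hfn : ∀ i j : Fin 3, i ≠ j → f i * f j = 0)
    (hf0 : f 0 * f 0 = f 1) (hf1 : f 1 * f 1 = lam' • f 0 + f 2)
    (hf2 : f 2 * f 2 = mu' • f 0) :
    (∃ φ : A ≃ₗ[K] B, ∀ x y : A, φ (x * y) = φ x * φ y) ↔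
      ∃ k : K, k ≠ 0 ∧ lam' = k ^ 3 * lam ∧ mu' = k ^ 7 * mu := by
  have P := III04_aux_mul lam' mu' f hfn hf0 hf1 hf2
  constructor
  · rintro ⟨φ, hφ⟩
    obtain ⟨x0, x1, x2, h0⟩ := III04_aux_repr f (φ (e 0))
    obtain ⟨z0, z1, z2, h2⟩ := III04_aux_repr f (φ (e 2))
    have h1 := hφ (e 0) (e 0)
    rw [he0, h0, P] at h1
    have h01 := hφ (e 0) (e 1)
    have h02 := hφ (e 0) (e 2)
    have h12 := hφ (e 1) (e 2)
    have h11 := hφ (e 1) (e 1)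
    have h22 := hφ (e 2) (e 2)
    rw [hen _ _ (by decide), map_zero, h0, h1, P] at h01
    rw [hen _ _ (by decide), map_zero, h0, h2, P] at h02
    rw [hen _ _ (by decide), map_zero, h1, h2, P] at h12
    rw [he1, map_add, map_smul, h0, h1, h2, P] at h11
    rw [he2, map_smul, h0, h2, P] at h22
    obtain ⟨a1, a2, a3⟩ := III04_aux_zero f _ _ _ h01.symm
    obtain ⟨b1, b2, b3⟩ := III04_aux_zero f _ _ _ h02.symm
    obtain ⟨c1, c2, c3⟩ := III04_aux_zero f _ _ _ h12.symm
    rw [← sub_eq_zero] at h11 h22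
    obtain ⟨d1, d2, d3⟩ := III04_aux_zero f
      (lam * x0 + z0 - (lam' * (x0 * x0 * (x0 * x0)) + mu' * (x1 * x1 * (x1 * x1))))
      (lam * x1 + z1 - (lam' * (x1 * x1) + mu' * (x2 * x2)) * (lam' * (x1 * x1) + mu' * (x2 * x2)))
      (lam * x2 + z2 - x0 * x0 * (x0 * x0)) (by rw [← h11]; module)
    obtain ⟨g1, g2, g3⟩ := III04_aux_zero f
      (mu * x0 - (lam' * (z1 * z1) + mu' * (z2 * z2)))
      (mu * x1 - z0 * z0) (mu * x2 - z1 * z1) (by rw [← h22]; module)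
    have hx1 : x1 = 0 := by
      by_contra hx
      have e0 : x0 = 0 := by simpa [hx] using a3
      subst e0
      have e2 : x2 = 0 := by simpa [hx, hmu'] using a1
      subst e2
      have ez : z0 = 0 := by simpa [hx, hlam'] using c2
      subst ez
      simp [hx, hmu'] at d1
    subst hx1
    have hx2 : x2 = 0 := by
      by_contra hx
      have e0 : x0 = 0 := by simpa [hx, hmu'] using a2
      subst e0
      have ez : z2 = 0 := by simpa [hx, hmu'] using b1
      subst ez
      simp [hx, hlam] at d3
    subst hx2
    have hx0 : x0 ≠ 0 := by
      rintro rfl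
      simp at h0
      exact e.ne_zero 0 h0
    have z1e : z1 = 0 := by simpa using g3
    have z0e : z0 = 0 := by simpa using g2
    subst z1e z0e
    refine ⟨x0⁻¹, inv_ne_zero hx0, ?_, ?_⟩
    · field_simp
      apply mul_right_cancel₀ hx0
      linear_combination -d1
    · have hz2 : z2 = x0 ^ 4 := by linear_combination d3
      subst hz2
      field_simp
      apply mul_right_cancel₀ hx0
      linear_combination -g1
  · rintro ⟨k, hk, rfl, rfl⟩
    let a : Kˣ := (Units.mk0 k hk)⁻¹
    have ha : (a : K) = k⁻¹ := by simp [a]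
    let g := f.unitsSMul ![a, a ^ 2, a ^ 4]
    have g0 : g 0 = k⁻¹ • f 0 := by simp [g, Module.Basis.unitsSMul_apply, Units.smul_def, ha]
    have g1 : g 1 = k⁻¹ ^ 2 • f 1 := by simp [g, Module.Basis.unitsSMul_apply, Units.smul_def, ha]
    have g2 : g 2 = k⁻¹ ^ 4 • f 2 := by simp [g, Module.Basis.unitsSMul_apply, Units.smul_def, ha]
    have Q := III04_aux_mul lam mu g
      (by
        intro i j hij
        simp only [g, Module.Basis.unitsSMul_apply, Units.smul_def, smul_mul_assoc,
          mul_smul_comm, hfn i j hij, smul_zero])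
      (by rw [g0, g1, smul_mul_assoc, mul_smul_comm, hf0, smul_smul, sq])
      (by
        rw [g0, g1, g2, smul_mul_assoc, mul_smul_comm, hf1]
        match_scalars <;> field_simp)
      (by
        rw [g0, g2, smul_mul_assoc, mul_smul_comm, hf2]
        match_scalars <;> field_simp)
    refine ⟨e.equiv g (Equiv.refl _), fun x y => ?_⟩
    obtain ⟨x0, x1, x2, rfl⟩ := III04_aux_repr e x
    obtain ⟨y0, y1, y2, rfl⟩ := III04_aux_repr e y
    rw [III04_aux_mul lam mu e hen he0 he1 he2]
    simp only [map_add, map_smul, Module.Basis.equiv_apply, Equiv.refl_apply]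
    rw [Q]
end

section
/- For λ, μ, γ ∈ K^×, let III⁰⁵_{λ,μ,γ} be the evolution algebra on K³ with natural basis {e₁,e₂,e₃} and products e₁² = e₂, e₂² = λe₁, e₃² = μe₁ + γe₂, e_i e_j = 0 for i ≠ j (structure matrix with rows (0,λ,μ),(1,0,γ),(0,1,0)). Then III⁰⁵_{λ,μ,γ} and III⁰⁵_{λ',μ',γ'} (all parameters in K^×) are isomorphic as K-algebras if and only if there exists k ∈ K^× with λ' = k³λ, μ' = k⁷μ and γ' = k⁶γ. -/
theorem III05_mul_repr {K B : Type*} [Field K]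
    [NonUnitalNonAssocCommRing B] [Module K B] [SMulCommClass K B B] [IsScalarTower K B B]
    (lam' mu' gam' : K)
    (f : Module.Basis (Fin 3) K B) (hfn : ∀ i j : Fin 3, i ≠ j → f i * f j = 0)
    (hf0 : f 0 * f 0 = f 1) (hf1 : f 1 * f 1 = lam' • f 0 + f 2)
    (hf2 : f 2 * f 2 = mu' • f 0 + gam' • f 1) (x y : B) :
    f.repr (x * y) 0 = lam' * (f.repr x 1 * f.repr y 1) + mu' * (f.repr x 2 * f.repr y 2) ∧
    f.repr (x * y) 1 = f.repr x 0 * f.repr y 0 + gam' * (f.repr x 2 * f.repr y 2) ∧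
    f.repr (x * y) 2 = f.repr x 1 * f.repr y 1 := by
  have h : x * y = (f.repr x 0 * f.repr y 0) • (f 0 * f 0)
      + (f.repr x 1 * f.repr y 1) • (f 1 * f 1) + (f.repr x 2 * f.repr y 2) • (f 2 * f 2) := by
    have hx := f.sum_repr x
    have hy := f.sum_repr y
    rw [Fin.sum_univ_three] at hx hy
    conv_lhs => rw [← hx, ← hy]
    simp [mul_add, add_mul, smul_mul_smul_comm, hfn 0 1, hfn 0 2, hfn 1 0,
      hfn 1 2, hfn 2 0, hfn 2 1]
  rw [h, hf0, hf1, hf2]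
  simp [Finsupp.single_apply]
  refine ⟨?_, ?_⟩ <;> ring

/-- For `λ, μ, γ ∈ K^×`, `III⁰⁵_{λ,μ,γ}` is the evolution algebra with
natural basis `{e₁,e₂,e₃}` and structure matrix with rows `(0,λ,μ),(1,0,γ),(0,1,0)` (the
`i`-th column holds the coordinates of `e_i²`), i.e. `e₁² = e₂`, `e₂² = λe₁ + e₃`,
`e₃² = μe₁ + γe₂`, and `e_i e_j = 0` for `i ≠ j`.  Then
`III⁰⁵_{λ,μ,γ} ≅ III⁰⁵_{λ',μ',γ'}` as `K`-algebras iff there is `k ∈ K^×` with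
`λ' = k³λ`, `μ' = k⁷μ` and `γ' = k⁶γ`. -/
theorem III05_iso_iff {K A B : Type*} [Field K]
    [NonUnitalNonAssocCommRing A] [Module K A] [SMulCommClass K A A] [IsScalarTower K A A]
    [NonUnitalNonAssocCommRing B] [Module K B] [SMulCommClass K B B] [IsScalarTower K B B]
    (lam mu gam lam' mu' gam' : K) (hlam : lam ≠ 0) (hmu : mu ≠ 0) (hgam : gam ≠ 0)
    (hlam' : lam' ≠ 0) (hmu' : mu' ≠ 0) (hgam' : gam' ≠ 0)
    (e : Module.Basis (Fin 3) K A) (hen : ∀ i j : Fin 3, i ≠ j → e i * e j = 0)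
    (he0 : e 0 * e 0 = e 1) (he1 : e 1 * e 1 = lam • e 0 + e 2)
    (he2 : e 2 * e 2 = mu • e 0 + gam • e 1)
    (f : Module.Basis (Fin 3) K B) (hfn : ∀ i j : Fin 3, i ≠ j → f i * f j = 0)
    (hf0 : f 0 * f 0 = f 1) (hf1 : f 1 * f 1 = lam' • f 0 + f 2)
    (hf2 : f 2 * f 2 = mu' • f 0 + gam' • f 1) :
    (∃ φ : A ≃ₗ[K] B, ∀ x y : A, φ (x * y) = φ x * φ y) ↔
      ∃ k : K, k ≠ 0 ∧ lam' = k ^ 3 * lam ∧ mu' = k ^ 7 * mu ∧ gam' = k ^ 6 * gam := by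
  constructor
  · rintro ⟨φ, hφ⟩
    have M := III05_mul_repr lam' mu' gam' f hfn hf0 hf1 hf2
    have nz : ∀ i, ¬ (f.repr (φ (e i)) 0 = 0 ∧ f.repr (φ (e i)) 1 = 0 ∧
        f.repr (φ (e i)) 2 = 0) := by
      rintro i ⟨h0, h1, h2⟩
      have : f.repr (φ (e i)) = 0 := by
        ext j
        fin_cases j <;> simp [h0, h1, h2]
      exact e.ne_zero i (by simpa using this)
    have orth : ∀ i j, i ≠ j → ∀ k, f.repr (φ (e i)) k * f.repr (φ (e j)) k = 0 := by
      intro i j hij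
      obtain ⟨m0, m1, m2⟩ := M (φ (e i)) (φ (e j))
      rw [← hφ, hen i j hij] at m0 m1 m2
      simp only [map_zero, Finsupp.coe_zero, Pi.zero_apply] at m0 m1 m2
      rw [← m2, mul_zero, zero_add] at m0
      have m0' := (mul_eq_zero.1 m0.symm).resolve_left hmu'
      rw [m0', mul_zero, add_zero] at m1
      intro k
      fin_cases k
      · exact m1.symm
      · exact m2.symm
      · exact m0'
    obtain ⟨a0, a1, a2⟩ := M (φ (e 0)) (φ (e 0))
    obtain ⟨b0, b1, b2⟩ := M (φ (e 1)) (φ (e 1))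
    obtain ⟨c0, c1, c2⟩ := M (φ (e 2)) (φ (e 2))
    rw [← hφ, he0] at a0 a1 a2
    rw [← hφ, he1] at b0 b1 b2
    rw [← hφ, he2] at c0 c1 c2
    simp only [map_add, map_smul, Finsupp.add_apply, Finsupp.smul_apply, smul_eq_mul]
      at b0 b1 b2 c0 c1 c2
    have o1 := orth 0 1 (by decide)
    have o2 := orth 0 2 (by decide)
    have o3 := orth 1 2 (by decide)
    have n0 := nz 0
    have n1 := nz 1
    have n2 := nz 2
    have o10 := o1 0
    have o11 := o1 1
    have o12 := o1 2
    have o20 := o2 0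
    have o21 := o2 1
    have o22 := o2 2
    have o30 := o3 0
    have o31 := o3 1
    have o32 := o3 2
    clear o1 o2 o3 nz orth M
    generalize f.repr (φ (e 0)) 0 = p0 at *
    generalize f.repr (φ (e 0)) 1 = p1 at *
    generalize f.repr (φ (e 0)) 2 = p2 at *
    generalize f.repr (φ (e 1)) 0 = q0 at *
    generalize f.repr (φ (e 1)) 1 = q1 at *
    generalize f.repr (φ (e 1)) 2 = q2 at *
    generalize f.repr (φ (e 2)) 0 = r0 at *
    generalize f.repr (φ (e 2)) 1 = r1 at *
    generalize f.repr (φ (e 2)) 2 = r2 at *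
    clear hφ hen he0 he1 he2 hfn hf0 hf1 hf2
    by_cases hp0 : p0 = 0
    · exfalso
      by_cases hp1 : p1 = 0
      · have hp2 : p2 ≠ 0 := fun h => n0 ⟨hp0, hp1, h⟩
        have hr2 : r2 = 0 := by simpa [hp2] using o22
        have hq0 : q0 ≠ 0 := by rw [a0, hp1]; simp [hp2, hmu']
        have hq1 : q1 ≠ 0 := by rw [a1, hp0]; simp [hp2, hgam']
        exact n2 ⟨by simpa [hq0] using o30, by simpa [hq1] using o31, hr2⟩
      · have hq1 : q1 = 0 := by simpa [hp1] using o11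
        have hr1 : r1 = 0 := by simpa [hp1] using o21
        have hp2 : p2 = 0 := by simpa [hq1, hp0, hgam'] using a1
        have hq2 : q2 ≠ 0 := by rw [a2]; simp [hp1]
        have hq0 : q0 ≠ 0 := by rw [a0, hp2]; simp [hp1, hlam']
        exact n2 ⟨by simpa [hq0] using o30, hr1, by simpa [hq2] using o32⟩
    · have hq0 : q0 = 0 := by simpa [hp0] using o10
      have hr0 : r0 = 0 := by simpa [hp0] using o20
      have hp1 : p1 = 0 := by
        by_contra hp1
        have hp2 : p2 ≠ 0 := by
          rintro rfl
          simp [hq0, hp1, hlam'] at a0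
        exact n1 ⟨hq0, by simpa [hp1] using o11, by simpa [hp2] using o12⟩
      have hp2 : p2 = 0 := by simpa [hq0, hp1, hmu'] using a0
      subst hp1 hp2 hq0 hr0
      simp only [mul_zero, zero_mul, add_zero, zero_add] at *
      subst a1 a2 b2
      simp only [mul_zero, zero_mul, add_zero, zero_add] at *
      refine ⟨p0⁻¹, inv_ne_zero hp0, ?_, ?_, ?_⟩
      · field_simp
        apply mul_left_cancel₀ hp0
        linear_combination -b0
      · field_simp
        apply mul_left_cancel₀ hp0
        linear_combination -c0 + lam' * c2
      · field_simp
        apply mul_left_cancel₀ (pow_ne_zero 2 hp0)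
        linear_combination -c1
  · rintro ⟨k, hk, rfl, rfl, rfl⟩
    have hc : ∀ i, IsUnit ((![k⁻¹, k⁻¹ ^ 2, k⁻¹ ^ 4] : Fin 3 → K) i) := by
      intro i
      fin_cases i <;> simp [hk]
    let φ : A ≃ₗ[K] B := e.equiv (f.isUnitSMul hc) (Equiv.refl _)
    have h0 : φ (e 0) = k⁻¹ • f 0 := by simp [φ, Module.Basis.isUnitSMul_apply]
    have h1 : φ (e 1) = k⁻¹ ^ 2 • f 1 := by simp [φ, Module.Basis.isUnitSMul_apply]
    have h2 : φ (e 2) = k⁻¹ ^ 4 • f 2 := by simp [φ, Module.Basis.isUnitSMul_apply]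
    clear_value φ
    have key : (LinearMap.mul K A).compr₂ φ.toLinearMap
        = (LinearMap.mul K B).compl₁₂ φ.toLinearMap φ.toLinearMap := by
      refine LinearMap.ext_basis e e ?_
      intro i j
      simp only [LinearMap.compr₂_apply, LinearMap.compl₁₂_apply, LinearMap.mul_apply',
        LinearEquiv.coe_coe]
      by_cases hij : i = j
      · subst hij
        fin_cases i
        · simp only [Fin.zero_eta, he0, h0, h1, smul_mul_smul_comm, hf0]
          congr 1; ring
        · simp only [Fin.mk_one, he1, map_add, map_smul, h0, h1, h2, smul_mul_smul_comm, hf1,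
            smul_add, smul_smul]
          congr 2 <;> field_simp
        · simp only [Fin.reduceFinMk, he2, map_add, map_smul, h0, h1, h2, smul_mul_smul_comm, hf2,
            smul_add, smul_smul]
          congr 2 <;> field_simp
      · rw [hen i j hij, map_zero]
        have hs : ∀ i, ∃ c : K, φ (e i) = c • f i := by
          intro i
          fin_cases i
          exacts [⟨_, h0⟩, ⟨_, h1⟩, ⟨_, h2⟩]
        obtain ⟨c, hc⟩ := hs i
        obtain ⟨d, hd⟩ := hs j
        rw [hc, hd, smul_mul_smul_comm, hfn i j hij, smul_zero]
    exact ⟨φ, fun x y => by simpa using LinearMap.congr_fun₂ key x y⟩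
end

section
/- For λ, μ, δ ∈ K^× with λμ + δ ≠ 0, let ₄III²⁶_{λ,μ,δ} be the evolution algebra on K³ with natural basis {e₁,e₂,e₃} and products e₁² = e₁ + λe₃, e₂² = e₂ + e₃, e₃² = μe₁ + δe₂, e_i e_j = 0 for i ≠ j (structure matrix with rows (1,0,μ),(0,1,δ),(λ,1,0)). Then ₄III²⁶_{λ,μ,δ} and ₄III²⁶_{λ',μ',δ'} (parameters in K^× with λμ + δ ≠ 0 and λ'μ' + δ' ≠ 0) are isomorphic as K-algebras if and only if (λ',μ',δ') = (λ,μ,δ) or (λ',μ',δ') = (λ^(−1), λ²δ, λ²μ). -/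
theorem mul_coord {K B : Type*} [Field K]
    [NonUnitalNonAssocCommRing B] [Module K B] [SMulCommClass K B B] [IsScalarTower K B B]
    (lam' mu' del' : K)
    (f : Module.Basis (Fin 3) K B) (hfn : ∀ i j : Fin 3, i ≠ j → f i * f j = 0)
    (hf0 : f 0 * f 0 = f 0 + lam' • f 2) (hf1 : f 1 * f 1 = f 1 + f 2)
    (hf2 : f 2 * f 2 = mu' • f 0 + del' • f 1) (x y : B) :
    f.repr (x * y) 0 = f.repr x 0 * f.repr y 0 + mu' * (f.repr x 2 * f.repr y 2) ∧
    f.repr (x * y) 1 = f.repr x 1 * f.repr y 1 + del' * (f.repr x 2 * f.repr y 2) ∧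
    f.repr (x * y) 2 = lam' * (f.repr x 0 * f.repr y 0) + f.repr x 1 * f.repr y 1 := by
  have hxy : x * y = (f.repr x 0 * f.repr y 0) • (f 0 + lam' • f 2)
      + (f.repr x 1 * f.repr y 1) • (f 1 + f 2)
      + (f.repr x 2 * f.repr y 2) • (mu' • f 0 + del' • f 1) := by
    conv_lhs => rw [← f.sum_repr x, ← f.sum_repr y]
    simp only [Fin.sum_univ_three, mul_add, add_mul, smul_mul_smul_comm, hf0, hf1, hf2,
      hfn 0 1 (by decide), hfn 0 2 (by decide), hfn 1 0 (by decide), hfn 1 2 (by decide),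
      hfn 2 0 (by decide), hfn 2 1 (by decide), smul_zero, add_zero, zero_add]
  rw [hxy]
  refine ⟨?_, ?_, ?_⟩ <;> simp [Finsupp.single_apply] <;> ring

theorem exists_iso {K A B : Type*} [Field K]
    [NonUnitalNonAssocCommRing A] [Module K A] [SMulCommClass K A A] [IsScalarTower K A A]
    [NonUnitalNonAssocCommRing B] [Module K B] [SMulCommClass K B B] [IsScalarTower K B B]
    (e : Module.Basis (Fin 3) K A) (f : Module.Basis (Fin 3) K B) (s : Fin 3 ≃ Fin 3)
    (h : ∀ i j, e.equiv f s (e i * e j) = f (s i) * f (s j)) :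
    ∃ φ : A ≃ₗ[K] B, ∀ x y : A, φ (x * y) = φ x * φ y := by
  refine ⟨e.equiv f s, fun x y => ?_⟩
  have key : (LinearMap.mul K A).compr₂ (e.equiv f s).toLinearMap =
      (LinearMap.mul K B).compl₁₂ (e.equiv f s).toLinearMap (e.equiv f s).toLinearMap := by
    refine e.ext fun i => e.ext fun j => ?_
    simpa using h i j
  exact LinearMap.congr_fun (LinearMap.congr_fun key x) y

theorem perm_solve {K : Type*} [Field K] (lam mu del lam' mu' del' : K)
    (hlam : lam ≠ 0) (hmu : mu ≠ 0) (hdel : del ≠ 0)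
    (hlam' : lam' ≠ 0) (hmu' : mu' ≠ 0) (hdel' : del' ≠ 0)
    (P : Fin 3 → Fin 3 → K) (hP : ∀ i, ∃ k, P i k ≠ 0)
    (h0 : ∀ i j, i ≠ j → ∀ k, P i k * P j k = 0)
    (a0 : P 0 0 + lam * P 2 0 = P 0 0 * P 0 0 + mu' * (P 0 2 * P 0 2))
    (a1 : P 0 1 + lam * P 2 1 = P 0 1 * P 0 1 + del' * (P 0 2 * P 0 2))
    (a2 : P 0 2 + lam * P 2 2 = lam' * (P 0 0 * P 0 0) + P 0 1 * P 0 1)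
    (b0 : P 1 0 + P 2 0 = P 1 0 * P 1 0 + mu' * (P 1 2 * P 1 2))
    (b1 : P 1 1 + P 2 1 = P 1 1 * P 1 1 + del' * (P 1 2 * P 1 2))
    (b2 : P 1 2 + P 2 2 = lam' * (P 1 0 * P 1 0) + P 1 1 * P 1 1)
    (c0 : mu * P 0 0 + del * P 1 0 = P 2 0 * P 2 0 + mu' * (P 2 2 * P 2 2))
    (c1 : mu * P 0 1 + del * P 1 1 = P 2 1 * P 2 1 + del' * (P 2 2 * P 2 2))
    (c2 : mu * P 0 2 + del * P 1 2 = lam' * (P 2 0 * P 2 0) + P 2 1 * P 2 1) :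
      (lam' = lam ∧ mu' = mu ∧ del' = del) ∨
      (lam' = lam⁻¹ ∧ mu' = lam ^ 2 * del ∧ del' = lam ^ 2 * mu) := by
  have z : ∀ i k, P i k ≠ 0 → ∀ j, j ≠ i → P j k = 0 := fun i k h j hj =>
    (mul_eq_zero.1 (h0 i j hj.symm k)).resolve_left h
  obtain ⟨k, hk⟩ := hP 0
  obtain ⟨l, hl⟩ := hP 1
  obtain ⟨m, hm⟩ := hP 2
  have hk1 := z 0 k hk 1 (by decide)
  have hk2 := z 0 k hk 2 (by decide)
  have hl0 := z 1 l hl 0 (by decide)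
  have hl2 := z 1 l hl 2 (by decide)
  have hm0 := z 2 m hm 0 (by decide)
  have hm1 := z 2 m hm 1 (by decide)
  clear z h0 hP
  fin_cases k <;> fin_cases l <;> fin_cases m <;>
    simp only [Fin.zero_eta, Fin.mk_one, Fin.reduceFinMk, Fin.isValue] at * <;>
    first
    | exact absurd ‹_› hk
    | exact absurd ‹_› hl
    | exact absurd ‹_› hm
    | grind


/-- For `λ, μ, δ ∈ K^×` with `λμ + δ ≠ 0`, `₄III²⁶_{λ,μ,δ}` is the
evolution algebra with natural basis `{e₁,e₂,e₃}`, structure matrix with rows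
`(1,0,μ),(0,1,δ),(λ,1,0)`, i.e. `e₁² = e₁ + λe₃`, `e₂² = e₂ + e₃`, `e₃² = μe₁ + δe₂`, and
`e_i e_j = 0` for `i ≠ j`.  Then `₄III²⁶_{λ,μ,δ} ≅ ₄III²⁶_{λ',μ',δ'}` as `K`-algebras iff
`(λ',μ',δ') = (λ,μ,δ)` or `(λ',μ',δ') = (λ⁻¹, λ²δ, λ²μ)`. -/
theorem III26_4_iso_iff {K A B : Type*} [Field K]
    [NonUnitalNonAssocCommRing A] [Module K A] [SMulCommClass K A A] [IsScalarTower K A A]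
    [NonUnitalNonAssocCommRing B] [Module K B] [SMulCommClass K B B] [IsScalarTower K B B]
    (lam mu del lam' mu' del' : K)
    (hlam : lam ≠ 0) (hmu : mu ≠ 0) (hdel : del ≠ 0)
    (hlam' : lam' ≠ 0) (hmu' : mu' ≠ 0) (hdel' : del' ≠ 0)
    (hD : lam * mu + del ≠ 0) (hD' : lam' * mu' + del' ≠ 0)
    (e : Module.Basis (Fin 3) K A) (hen : ∀ i j : Fin 3, i ≠ j → e i * e j = 0)
    (he0 : e 0 * e 0 = e 0 + lam • e 2) (he1 : e 1 * e 1 = e 1 + e 2)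
    (he2 : e 2 * e 2 = mu • e 0 + del • e 1)
    (f : Module.Basis (Fin 3) K B) (hfn : ∀ i j : Fin 3, i ≠ j → f i * f j = 0)
    (hf0 : f 0 * f 0 = f 0 + lam' • f 2) (hf1 : f 1 * f 1 = f 1 + f 2)
    (hf2 : f 2 * f 2 = mu' • f 0 + del' • f 1) :
    (∃ φ : A ≃ₗ[K] B, ∀ x y : A, φ (x * y) = φ x * φ y) ↔
      (lam' = lam ∧ mu' = mu ∧ del' = del) ∨
      (lam' = lam⁻¹ ∧ mu' = lam ^ 2 * del ∧ del' = lam ^ 2 * mu) := by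
  constructor
  · rintro ⟨φ, hφ⟩
    have M := mul_coord lam' mu' del' f hfn hf0 hf1 hf2
    have Z : ∀ x y : B, x * y = 0 → ∀ k, f.repr x k * f.repr y k = 0 := by
      intro x y hxy
      obtain ⟨m0, m1, m2⟩ := M x y
      rw [hxy] at m0 m1 m2
      simp only [map_zero, Finsupp.coe_zero, Pi.zero_apply] at m0 m1 m2
      have t2 : f.repr x 2 * f.repr y 2 = 0 := by
        have : (lam' * mu' + del') * (f.repr x 2 * f.repr y 2) = 0 := by
          linear_combination (-lam') * m0 - m1 + m2
        exact (mul_eq_zero.1 this).resolve_left hD'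
      intro k
      fin_cases k
      · change f.repr x 0 * f.repr y 0 = 0
        linear_combination -m0 - mu' * t2
      · change f.repr x 1 * f.repr y 1 = 0
        linear_combination -m1 - del' * t2
      · exact t2
    have A0 := M (φ (e 0)) (φ (e 0))
    have A1 := M (φ (e 1)) (φ (e 1))
    have A2 := M (φ (e 2)) (φ (e 2))
    rw [← hφ, he0] at A0
    rw [← hφ, he1] at A1
    rw [← hφ, he2] at A2
    simp only [map_add, map_smul, Finsupp.add_apply, Finsupp.smul_apply, smul_eq_mul] at A0 A1 A2
    obtain ⟨a0, a1, a2⟩ := A0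
    obtain ⟨b0, b1, b2⟩ := A1
    obtain ⟨c0, c1, c2⟩ := A2
    refine perm_solve lam mu del lam' mu' del' hlam hmu hdel hlam' hmu' hdel'
      (fun i k => f.repr (φ (e i)) k) ?_ ?_ a0 a1 a2 b0 b1 b2 c0 c1 c2
    · intro i
      by_contra! h
      have : f.repr (φ (e i)) = 0 := Finsupp.ext h
      exact e.ne_zero i (by simpa using this)
    · intro i j hij k
      exact Z _ _ (by rw [← hφ, hen i j hij, map_zero]) k
  · rintro (⟨rfl, rfl, rfl⟩ | ⟨rfl, rfl, rfl⟩)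
    · refine exists_iso e f (Equiv.refl _) fun i j => ?_
      by_cases hij : i = j
      · subst hij
        fin_cases i <;> simp [he0, he1, he2, hf0, hf1, hf2]
      · simp [hen i j hij, hfn i j hij]
    · let w : Fin 3 → K := ![1, 1, lam⁻¹]
      have hw : ∀ i, IsUnit (w i) := by
        intro i
        fin_cases i <;> simp [w, hlam]
      refine exists_iso e (f.isUnitSMul hw) (Equiv.swap 0 1) fun i j => ?_
      have s2 : Equiv.swap (0 : Fin 3) 1 2 = 2 := by decide
      by_cases hij : i = j
      · subst hij
        fin_cases i
        · simp [he0, hf1, w, s2, Module.Basis.isUnitSMul_apply, smul_smul, hlam]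
        · simp [he1, hf0, w, s2, Module.Basis.isUnitSMul_apply]
        · simp only [Fin.reduceFinMk, he2, map_add, map_smul, Module.Basis.equiv_apply, s2,
            Module.Basis.isUnitSMul_apply, smul_mul_smul_comm, hf2, Equiv.swap_apply_left,
            Equiv.swap_apply_right, smul_add, smul_smul]
          simp [w]
          field_simp
          rw [add_comm]
      · have := hfn _ _ ((Equiv.swap (0 : Fin 3) 1).injective.ne hij)
        simp [hen i j hij, Module.Basis.isUnitSMul_apply, smul_mul_smul_comm, this]
end

section
/- Let A₁ and A₂ be finite-dimensional simple evolution algebras over a field K with directed graphs E and F relative to natural bases, let d₁ (resp. d₂) be the greatest common divisor of the lengths of all closed directed paths in E (resp. F). Then the tensor product algebra A₁ ⊗_K A₂ (with multiplication (a⊗b)(a'⊗b') = aa' ⊗ bb') is a simple algebra if and only if gcd(d₁, d₂) = 1. In particular, if E and F possess closed paths of coprime lengths, then A₁ ⊗_K A₂ is simple. -/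
open scoped TensorProduct

/-- `EvoWalk r n i j`: there is a directed walk of length `n` from `i` to `j`. -/
def EvoWalk {ι : Type*} (r : ι → ι → Prop) : ℕ → ι → ι → Prop
  | 0, i, j => i = j
  | n + 1, i, j => ∃ k, r i k ∧ EvoWalk r n k j

theorem EvoWalk.trans {ι : Type*} {r : ι → ι → Prop} {n m : ℕ} {i j k : ι}
    (h : EvoWalk r n i j) (h' : EvoWalk r m j k) : EvoWalk r (n + m) i k := by
  induction n generalizing i with
  | zero => cases h; simpa using h'
  | succ n ih =>
    obtain ⟨a, ha, hw⟩ := h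
    rw [Nat.add_right_comm]
    exact ⟨a, ha, ih hw⟩

theorem EvoWalk.single {ι : Type*} {r : ι → ι → Prop} {i j : ι} (h : r i j) :
    EvoWalk r 1 i j := ⟨j, h, rfl⟩

theorem evoWalk_iff_list {ι : Type*} {r : ι → ι → Prop} {n : ℕ} {i j : ι} :
    EvoWalk r n i j ↔ ∃ l : List ι, l.length = n ∧ List.IsChain r (i :: l) ∧
      (i :: l).getLast (by simp) = j := by
  induction n generalizing i with
  | zero =>
    constructor
    · rintro h
      exact ⟨[], rfl, List.IsChain.singleton _, h⟩
    · rintro ⟨l, hl, -, h⟩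
      obtain rfl := List.length_eq_zero_iff.mp hl
      exact h
  | succ n ih =>
    constructor
    · rintro ⟨k, hk, hw⟩
      obtain ⟨l, hl, hc, hj⟩ := ih.mp hw
      refine ⟨k :: l, by simp [hl], List.IsChain.cons_cons hk hc, ?_⟩
      rw [List.getLast_cons (by simp)]
      exact hj
    · rintro ⟨l, hl, hc, hj⟩
      cases l with
      | nil => simp at hl
      | cons k l =>
        rw [List.isChain_cons_cons] at hc
        rw [List.getLast_cons (by simp)] at hj
        exact ⟨k, hc.1, ih.mpr ⟨l, by simpa using hl, hc.2, hj⟩⟩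

theorem evo_closed_iff {ι : Type*} {r : ι → ι → Prop} (c : ℕ) :
    (∀ (l : List ι) (h : l ≠ []), List.Chain r (l.getLast h) l → c ∣ l.length) ↔
      ∀ n i, EvoWalk r n i i → c ∣ n := by
  constructor
  · intro H n i hw
    obtain ⟨l, rfl, hc, hj⟩ := evoWalk_iff_list.mp hw
    by_cases h : l = []
    · simp [h]
    · rw [List.getLast_cons h] at hj
      refine H l h ?_
      rw [hj]
      exact hc
  · intro H l h hc
    refine H _ (l.getLast h) (evoWalk_iff_list.mpr ⟨l, rfl, hc, ?_⟩)
    rw [List.getLast_cons h]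

theorem evo_large {ι : Type*} {r : ι → ι → Prop} {d : ℕ}
    (hd : ∀ c, (∀ n i, EvoWalk r n i i → c ∣ n) → c ∣ d)
    (hsc : ∀ i j, ∃ n, 0 < n ∧ EvoWalk r n i j) (i : ι) :
    ∃ N, ∀ m ≥ N, d ∣ m → EvoWalk r m i i := by
  let S : AddSubmonoid ℕ :=
    { carrier := {n | EvoWalk r n i i}
      zero_mem' := rfl
      add_mem' := fun h h' => EvoWalk.trans h h' }
  obtain ⟨N, hN⟩ := Nat.exists_mem_closure_of_ge (S : Set ℕ)
  refine ⟨N, fun m hm hdm => ?_⟩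
  have h1 : Nat.setGcd (S : Set ℕ) ∣ d := by
    apply hd
    intro n k hk
    obtain ⟨a, -, ha⟩ := hsc i k
    obtain ⟨b, -, hb⟩ := hsc k i
    have e1 : Nat.setGcd (S : Set ℕ) ∣ a + b :=
      Nat.setGcd_dvd_of_mem (show a + b ∈ S from ha.trans hb)
    have e2 : Nat.setGcd (S : Set ℕ) ∣ a + n + b :=
      Nat.setGcd_dvd_of_mem (show a + n + b ∈ S from (ha.trans hk).trans hb)
    have : a + n + b = (a + b) + n := by omega
    rw [this] at e2
    exact (Nat.dvd_add_right e1).mp e2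
  have := hN m hm (h1.trans hdm)
  rw [AddSubmonoid.closure_eq] at this
  exact this

theorem evoWalk_prod {ι κ : Type*} {r : ι → ι → Prop} {s : κ → κ → Prop} {n : ℕ}
    {p q : ι × κ} : EvoWalk (fun p q : ι × κ => r p.1 q.1 ∧ s p.2 q.2) n p q ↔
      EvoWalk r n p.1 q.1 ∧ EvoWalk s n p.2 q.2 := by
  induction n generalizing p with
  | zero => exact Prod.ext_iff
  | succ n ih =>
    constructor
    · rintro ⟨k, hk, hw⟩
      rw [ih] at hw
      exact ⟨⟨k.1, hk.1, hw.1⟩, ⟨k.2, hk.2, hw.2⟩⟩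
    · rintro ⟨⟨k, hk, hw⟩, ⟨k', hk', hw'⟩⟩
      exact ⟨(k, k'), ⟨hk, hk'⟩, ih.mpr ⟨hw, hw'⟩⟩

theorem evo_graph {ι κ : Type*} [Nonempty ι] [Nonempty κ]
    {r : ι → ι → Prop} {s : κ → κ → Prop} {d e : ℕ}
    (hd1 : ∀ n i, EvoWalk r n i i → d ∣ n)
    (hd : ∀ c, (∀ n i, EvoWalk r n i i → c ∣ n) → c ∣ d)
    (hsc : ∀ i j, ∃ n, 0 < n ∧ EvoWalk r n i j)
    (he1 : ∀ n i, EvoWalk s n i i → e ∣ n)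
    (he : ∀ c, (∀ n i, EvoWalk s n i i → c ∣ n) → c ∣ e)
    (hsc' : ∀ i j, ∃ n, 0 < n ∧ EvoWalk s n i j) :
    (∀ p q, ∃ n, 0 < n ∧ EvoWalk (fun p q : ι × κ => r p.1 q.1 ∧ s p.2 q.2) n p q) ↔
      Nat.gcd d e = 1 := by
  simp only [evoWalk_prod]
  constructor
  · intro H
    obtain ⟨i⟩ := ‹Nonempty ι›
    obtain ⟨j⟩ := ‹Nonempty κ›
    obtain ⟨t, ht, hw⟩ := hsc i i
    obtain ⟨t, rfl⟩ : ∃ t', t = t' + 1 := ⟨t - 1, by omega⟩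
    obtain ⟨i', hi', hw'⟩ := hw
    obtain ⟨n, -, hn1, hn2⟩ := H (i, j) (i', j)
    have h1 : Nat.gcd d e ∣ n := (Nat.gcd_dvd_right d e).trans (he1 _ _ hn2)
    have h2 : Nat.gcd d e ∣ n + t := (Nat.gcd_dvd_left d e).trans (hd1 _ _ (hn1.trans hw'))
    have h3 : Nat.gcd d e ∣ t + 1 := (Nat.gcd_dvd_left d e).trans (hd1 _ i ⟨i', hi', hw'⟩)
    have h4 := (Nat.dvd_add_right h1).mp h2
    exact Nat.dvd_one.mp ((Nat.dvd_add_right h4).mp h3)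
  · intro hg p q
    obtain ⟨a, ha, hwa⟩ := hsc p.1 q.1
    obtain ⟨b, hb, hwb⟩ := hsc' p.2 q.2
    obtain ⟨N, hN⟩ := evo_large hd hsc p.1
    obtain ⟨M, hM⟩ := evo_large he hsc' p.2
    have hd0 : 0 < d := by
      by_contra h
      obtain ⟨t, ht, hw⟩ := hsc p.1 p.1
      have := hd1 _ _ hw
      have h0 : d = 0 := by omega
      rw [h0, zero_dvd_iff] at this
      omega
    have he0 : 0 < e := by
      by_contra h
      obtain ⟨t, ht, hw⟩ := hsc' p.2 p.2
      have := he1 _ _ hw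
      have h0 : e = 0 := by omega
      rw [h0, zero_dvd_iff] at this
      omega
    obtain ⟨c, hc1, hc2⟩ := Nat.chineseRemainder (show Nat.Coprime d e from hg) a b
    let n := c + d * e * (a + b + N + M)
    have hpos : 0 < d * e := Nat.mul_pos hd0 he0
    have hn : a + b + N + M ≤ n := by
      have : 1 * (a + b + N + M) ≤ d * e * (a + b + N + M) := Nat.mul_le_mul_right _ hpos
      simp only [n]; omega
    have hna : a ≡ n [MOD d] := by
      refine hc1.symm.trans ?_
      simp only [n, mul_assoc]
      exact (Nat.modEq_iff_dvd' (by omega)).mpr (by simp)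
    have hnb : b ≡ n [MOD e] := by
      refine hc2.symm.trans ?_
      simp only [n, mul_comm d e, mul_assoc]
      exact (Nat.modEq_iff_dvd' (by omega)).mpr (by simp)
    have hda : d ∣ n - a := (Nat.modEq_iff_dvd' (by omega)).mp hna
    have hdb : e ∣ n - b := (Nat.modEq_iff_dvd' (by omega)).mp hnb
    refine ⟨n, by omega, ?_, ?_⟩
    · have := (hN (n - a) (by omega) hda).trans hwa
      rwa [Nat.sub_add_cancel (by omega)] at this
    · have := (hM (n - b) (by omega) hdb).trans hwb
      rwa [Nat.sub_add_cancel (by omega)] at this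

section evo
variable {K A ι : Type*} [Field K] [NonUnitalNonAssocSemiring A] [Module K A]
  [SMulCommClass K A A] [IsScalarTower K A A]

theorem evo_mul_right (b : Module.Basis ι K A) (hn : ∀ i j : ι, i ≠ j → b i * b j = 0)
    (x : A) (i : ι) : x * b i = b.repr x i • (b i * b i) := by
  classical
  have : LinearMap.mulRight K (b i) = (b.coord i).smulRight (b i * b i) := by
    refine b.ext fun j => ?_
    by_cases h : j = i
    · subst h; simp
    · simp [hn j i h, Finsupp.single_apply, h]
  simpa using LinearMap.congr_fun this x

theorem evo_mul_left (b : Module.Basis ι K A) (hn : ∀ i j : ι, i ≠ j → b i * b j = 0)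
    (x : A) (i : ι) : b i * x = b.repr x i • (b i * b i) := by
  classical
  have : LinearMap.mulLeft K (b i) = (b.coord i).smulRight (b i * b i) := by
    refine b.ext fun j => ?_
    by_cases h : j = i
    · subst h; simp
    · simp [hn i j (Ne.symm h), Finsupp.single_apply, h]
  simpa using LinearMap.congr_fun this x

/-- An ideal criterion: a submodule containing the squares of all basis vectors in the support of
its elements is an ideal. -/
theorem evo_ideal (b : Module.Basis ι K A) (hn : ∀ i j : ι, i ≠ j → b i * b j = 0)
    (I : Submodule K A) (H : ∀ x ∈ I, ∀ i, b.repr x i ≠ 0 → b i * b i ∈ I) :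
    ∀ x ∈ I, ∀ a : A, a * x ∈ I ∧ x * a ∈ I := by
  intro x hx a
  have key : ∀ i, b.repr x i • (b i * b i) ∈ I := by
    intro i
    by_cases h : b.repr x i = 0
    · simp [h]
    · exact I.smul_mem _ (H x hx i h)
  have h1 : (⊤ : Submodule K A) ≤ I.comap (LinearMap.mulRight K x) := by
    rw [← b.span_eq, Submodule.span_le]
    rintro _ ⟨i, rfl⟩
    simpa [evo_mul_left b hn x i] using key i
  have h2 : (⊤ : Submodule K A) ≤ I.comap (LinearMap.mulLeft K x) := by
    rw [← b.span_eq, Submodule.span_le]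
    rintro _ ⟨i, rfl⟩
    simpa [evo_mul_right b hn x i] using key i
  exact ⟨h1 (Submodule.mem_top (x := a)), h2 (Submodule.mem_top (x := a))⟩

theorem evo_simple_iff (b : Module.Basis ι K A) (hn : ∀ i j : ι, i ≠ j → b i * b j = 0)
    (r : ι → ι → Prop) (he : ∀ i j : ι, r i j ↔ b.repr (b i * b i) j ≠ 0) :
    ((∃ x y : A, x * y ≠ 0) ∧
      ∀ I : Submodule K A, (∀ x ∈ I, ∀ a : A, a * x ∈ I ∧ x * a ∈ I) → I = ⊥ ∨ I = ⊤) ↔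
    (Nonempty ι ∧ Submodule.span K (Set.range fun i => b i * b i) = ⊤ ∧
      ∀ i j, ∃ n, 0 < n ∧ EvoWalk r n i j) := by
  constructor
  · rintro ⟨⟨x, y, hxy⟩, hI⟩
    have hsq : ∀ i, b i * b i ≠ 0 := by
      intro i hi
      have := hI (Submodule.span K {b i}) (by
        apply evo_ideal b hn
        intro z hz j hj
        obtain ⟨c, rfl⟩ := Submodule.mem_span_singleton.mp hz
        have : j = i := by
          by_contra hne
          exact hj (by simp [Finsupp.single_apply, Ne.symm hne])
        subst this
        rw [hi]; exact zero_mem _)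
      rcases this with h | h
      · exact b.ne_zero i (by simpa using h)
      · obtain ⟨c, hc⟩ := Submodule.mem_span_singleton.mp (h ▸ Submodule.mem_top (x := x))
        obtain ⟨c', hc'⟩ := Submodule.mem_span_singleton.mp (h ▸ Submodule.mem_top (x := y))
        apply hxy
        rw [← hc, ← hc', smul_mul_assoc, mul_smul_comm, hi, smul_zero, smul_zero]
    have hne : Nonempty ι := by
      by_contra h
      rw [not_nonempty_iff] at h
      apply hxy
      have : x = 0 := b.repr.injective (Subsingleton.elim _ _)
      rw [this, zero_mul]
    refine ⟨hne, ?_, ?_⟩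
    · refine (hI _ (evo_ideal b hn _ ?_)).resolve_left ?_
      · intro _ _ i _
        exact Submodule.subset_span ⟨i, rfl⟩
      · intro h
        obtain ⟨i⟩ := hne
        apply hsq i
        have : b i * b i ∈ Submodule.span K (Set.range fun i => b i * b i) :=
          Submodule.subset_span ⟨i, rfl⟩
        rw [h] at this
        simpa using this
    · intro i
      let S : Set ι := {j | ∃ n, 0 < n ∧ EvoWalk r n i j}
      have h := hI (Submodule.span K (b '' S)) (by
        apply evo_ideal b hn
        intro z hz j hj
        rw [Module.Basis.mem_span_image] at hz ⊢
        obtain ⟨n, hn0, hw⟩ := hz (Finsupp.mem_support_iff.mpr hj)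
        intro k hk
        exact ⟨n + 1, by omega, hw.trans (EvoWalk.single
          ((he j k).mpr (Finsupp.mem_support_iff.mp hk)))⟩)
      have hmem : b i * b i ∈ Submodule.span K (b '' S) := by
        rw [Module.Basis.mem_span_image]
        intro k hk
        exact ⟨1, one_pos, EvoWalk.single ((he i k).mpr (Finsupp.mem_support_iff.mp hk))⟩
      rcases h with h | h
      · rw [h] at hmem
        exact absurd (by simpa using hmem) (hsq i)
      · intro j
        have : b j ∈ Submodule.span K (b '' S) := h ▸ Submodule.mem_top
        rw [Module.Basis.mem_span_image] at this
        exact this (by simp)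
  · rintro ⟨⟨i₀⟩, hspan, hsc⟩
    constructor
    · refine ⟨b i₀, b i₀, fun h => ?_⟩
      obtain ⟨n, hn0, hw⟩ := hsc i₀ i₀
      obtain ⟨n, rfl⟩ : ∃ t, n = t + 1 := ⟨n - 1, by omega⟩
      obtain ⟨k, hk, -⟩ := hw
      rw [he, h] at hk
      simp at hk
    · intro I hI
      by_cases hb : I = ⊥
      · exact Or.inl hb
      right
      obtain ⟨x, hx, hx0⟩ := I.ne_bot_iff.mp hb
      obtain ⟨i, hi⟩ : ∃ i, b.repr x i ≠ 0 := by
        by_contra! h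
        exact hx0 (b.repr.injective (by ext i; simp [h i]))
      have step : ∀ (y : A), y ∈ I → ∀ j, b.repr y j ≠ 0 → b j * b j ∈ I := by
        intro y hy j hj
        have := (hI y hy (b j)).1
        rw [evo_mul_left b hn] at this
        exact (I.smul_mem_iff hj).mp this
      have walk : ∀ n i j, EvoWalk r n i j → b i * b i ∈ I → b j * b j ∈ I := by
        intro n
        induction n with
        | zero => rintro i j rfl h; exact h
        | succ n ih =>
          rintro i j ⟨k, hk, hw⟩ h
          exact ih k j hw (step _ h k ((he i k).mp hk))
      rw [eq_top_iff, ← hspan, Submodule.span_le]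
      rintro _ ⟨j, rfl⟩
      obtain ⟨n, -, hw⟩ := hsc i j
      exact walk n i j hw (step x hx i hi)

end evo

/-- Let `A₁` and `A₂` be finite-dimensional simple evolution algebras over a
field `K` with directed graphs `E`, `F` relative to natural bases, and let `d₁` (resp. `d₂`) be
the gcd of the lengths of all closed directed paths in `E` (resp. `F`) (characterized by the
universal property of gcd; closed paths of length `n` are encoded as nonempty lists `l` of
vertices with `List.Chain edge (l.getLast h) l`).  Then the tensor product algebra
`A₁ ⊗[K] A₂` is simple iff `gcd d₁ d₂ = 1`; in particular, if `E` and `F` possess closed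
paths of coprime lengths, then `A₁ ⊗[K] A₂` is simple. -/
theorem tensor_simple_iff_gcd_eq_one {K A₁ A₂ : Type*} [Field K]
    [NonUnitalNonAssocCommRing A₁] [Module K A₁]
    [SMulCommClass K A₁ A₁] [IsScalarTower K A₁ A₁]
    [NonUnitalNonAssocCommRing A₂] [Module K A₂]
    [SMulCommClass K A₂ A₂] [IsScalarTower K A₂ A₂]
    {ι₁ ι₂ : Type*} [Fintype ι₁] [Fintype ι₂]
    (b₁ : Module.Basis ι₁ K A₁) (hn₁ : ∀ i j : ι₁, i ≠ j → b₁ i * b₁ j = 0)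
    (b₂ : Module.Basis ι₂ K A₂) (hn₂ : ∀ i j : ι₂, i ≠ j → b₂ i * b₂ j = 0)
    (hs₁ : (∃ x y : A₁, x * y ≠ 0) ∧
      ∀ I : Submodule K A₁, (∀ x ∈ I, ∀ a : A₁, a * x ∈ I ∧ x * a ∈ I) → I = ⊥ ∨ I = ⊤)
    (hs₂ : (∃ x y : A₂, x * y ≠ 0) ∧
      ∀ I : Submodule K A₂, (∀ x ∈ I, ∀ a : A₂, a * x ∈ I ∧ x * a ∈ I) → I = ⊥ ∨ I = ⊤)
    (edge₁ : ι₁ → ι₁ → Prop) (he₁ : ∀ i j : ι₁, edge₁ i j ↔ b₁.repr (b₁ i * b₁ i) j ≠ 0)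
    (edge₂ : ι₂ → ι₂ → Prop) (he₂ : ∀ i j : ι₂, edge₂ i j ↔ b₂.repr (b₂ i * b₂ i) j ≠ 0)
    (d₁ d₂ : ℕ)
    (hd₁ : (∀ (l : List ι₁) (h : l ≠ []),
        List.Chain edge₁ (l.getLast h) l → d₁ ∣ l.length) ∧
      ∀ c : ℕ, (∀ (l : List ι₁) (h : l ≠ []),
        List.Chain edge₁ (l.getLast h) l → c ∣ l.length) → c ∣ d₁)
    (hd₂ : (∀ (l : List ι₂) (h : l ≠ []),
        List.Chain edge₂ (l.getLast h) l → d₂ ∣ l.length) ∧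
      ∀ c : ℕ, (∀ (l : List ι₂) (h : l ≠ []),
        List.Chain edge₂ (l.getLast h) l → c ∣ l.length) → c ∣ d₂) :
    (((∃ x y : A₁ ⊗[K] A₂, x * y ≠ 0) ∧
        ∀ I : Submodule K (A₁ ⊗[K] A₂),
          (∀ x ∈ I, ∀ a : A₁ ⊗[K] A₂, a * x ∈ I ∧ x * a ∈ I) → I = ⊥ ∨ I = ⊤)
      ↔ Nat.gcd d₁ d₂ = 1) ∧
    ((∃ (l₁ : List ι₁) (h₁ : l₁ ≠ []) (l₂ : List ι₂) (h₂ : l₂ ≠ []),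
        List.Chain edge₁ (l₁.getLast h₁) l₁ ∧ List.Chain edge₂ (l₂.getLast h₂) l₂ ∧
        Nat.Coprime l₁.length l₂.length) →
      (∃ x y : A₁ ⊗[K] A₂, x * y ≠ 0) ∧
        ∀ I : Submodule K (A₁ ⊗[K] A₂),
          (∀ x ∈ I, ∀ a : A₁ ⊗[K] A₂, a * x ∈ I ∧ x * a ∈ I) → I = ⊥ ∨ I = ⊤) := by
  simp only [evo_closed_iff] at hd₁ hd₂
  obtain ⟨ne₁, sp₁, sc₁⟩ := (evo_simple_iff b₁ hn₁ edge₁ he₁).mp hs₁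
  obtain ⟨ne₂, sp₂, sc₂⟩ := (evo_simple_iff b₂ hn₂ edge₂ he₂).mp hs₂
  have hg := evo_graph hd₁.1 hd₁.2 sc₁ hd₂.1 hd₂.2 sc₂
  have hmain : ((∃ x y : A₁ ⊗[K] A₂, x * y ≠ 0) ∧
        ∀ I : Submodule K (A₁ ⊗[K] A₂),
          (∀ x ∈ I, ∀ a : A₁ ⊗[K] A₂, a * x ∈ I ∧ x * a ∈ I) → I = ⊥ ∨ I = ⊤)
      ↔ Nat.gcd d₁ d₂ = 1 := by
    rw [← hg]
    refine (evo_simple_iff (b₁.tensorProduct b₂) ?_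
      (fun p q => edge₁ p.1 q.1 ∧ edge₂ p.2 q.2) ?_).trans ?_
    · rintro ⟨i, j⟩ ⟨i', j'⟩ hne
      rw [Module.Basis.tensorProduct_apply, Module.Basis.tensorProduct_apply,
        Algebra.TensorProduct.tmul_mul_tmul]
      by_cases h : i = i'
      · have h' : j ≠ j' := fun h' => hne (by rw [h, h'])
        rw [hn₂ _ _ h', TensorProduct.tmul_zero]
      · rw [hn₁ _ _ h, TensorProduct.zero_tmul]
    · rintro ⟨i, j⟩ ⟨i', j'⟩
      rw [Module.Basis.tensorProduct_apply, Algebra.TensorProduct.tmul_mul_tmul,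
        Module.Basis.tensorProduct_repr_tmul_apply]
      simp [he₁, he₂, and_comm]
    · refine ⟨fun h => h.2.2, fun h => ⟨inferInstance, ?_, h⟩⟩
      rw [← TensorProduct.map₂_mk_top_top_eq_top, ← sp₁, ← sp₂, Submodule.map₂_span_span,
        Set.image2_range]
      congr 2
      ext ⟨i, j⟩
      simp [Module.Basis.tensorProduct_apply]
  refine ⟨hmain, ?_⟩
  rintro ⟨l₁, h₁, l₂, h₂, c₁, c₂, hco⟩
  rw [hmain]
  exact Nat.Coprime.coprime_dvd_left ((evo_closed_iff d₁).mpr hd₁.1 l₁ h₁ c₁)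
    (Nat.Coprime.coprime_dvd_right ((evo_closed_iff d₂).mpr hd₂.1 l₂ h₂ c₂) hco)
end

section
/- Let A₁ and A₂ be finite-dimensional simple evolution algebras over a field K. Then the tensor product algebra A₁ ⊗_K A₂ (with multiplication (a⊗b)(a'⊗b') = aa' ⊗ bb') is semisimple: it is the direct sum of finitely many two-sided ideals, each of which is a simple algebra (indeed, the number of summands equals gcd(d₁, d₂), where d_i is the gcd of the lengths of closed paths in the directed graph of A_i). -/
open scoped TensorProduct

/-- Existence of a walk of given length in a directed graph. -/
def EvWalk {ι : Type*} (E : ι → ι → Prop) : ℕ → ι → ι → Prop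
  | 0, u, v => u = v
  | n + 1, u, v => ∃ w, E u w ∧ EvWalk E n w v

theorem EvWalk.append {ι : Type*} {E : ι → ι → Prop} {m n : ℕ} {u v w : ι}
    (h1 : EvWalk E m u v) (h2 : EvWalk E n v w) : EvWalk E (m + n) u w := by
  induction m generalizing u with
  | zero => cases h1; simpa using h2
  | succ m ih =>
    obtain ⟨x, hx, h⟩ := h1
    rw [show m + 1 + n = (m + n) + 1 by omega]
    exact ⟨x, hx, ih h⟩

theorem EvWalk.of_chain {ι : Type*} {E : ι → ι → Prop} (l : List ι) (u : ι)
    (h : List.IsChain E (u :: l)) :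
    EvWalk E l.length u ((u :: l).getLast (List.cons_ne_nil _ _)) := by
  induction l generalizing u with
  | nil => rfl
  | cons a l ih =>
    rw [List.isChain_cons_cons] at h
    refine ⟨a, h.1, ?_⟩
    rw [List.getLast_cons (List.cons_ne_nil _ _)]
    exact ih a h.2

theorem EvWalk.to_chain {ι : Type*} {E : ι → ι → Prop} (n : ℕ) (u v : ι)
    (h : EvWalk E n u v) : ∃ l : List ι, l.length = n ∧ List.IsChain E (u :: l) ∧
      (u :: l).getLast (List.cons_ne_nil _ _) = v := by
  induction n generalizing u with
  | zero => exact ⟨[], rfl, by simp, h⟩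
  | succ n ih =>
    obtain ⟨w, hw, h⟩ := h
    obtain ⟨l, h1, h2, h3⟩ := ih w h
    refine ⟨w :: l, by simp [h1], List.isChain_cons_cons.2 ⟨hw, h2⟩, ?_⟩
    rw [List.getLast_cons (List.cons_ne_nil _ _)]
    exact h3

theorem evWalk_dvd_iff {ι : Type*} (E : ι → ι → Prop) (c : ℕ) :
    (∀ (l : List ι) (h : l ≠ []), List.IsChain E (l.getLast h :: l) → c ∣ l.length) ↔
      ∀ n v, EvWalk E n v v → c ∣ n := by
  constructor
  · intro H n v h
    obtain ⟨l, h1, h2, h3⟩ := EvWalk.to_chain n v v h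
    rcases eq_or_ne l [] with rfl | hl
    · simp at h1; subst h1; simp
    · rw [List.getLast_cons hl] at h3
      rw [← h1]
      exact H l hl (by rw [h3]; exact h2)
  · intro H l hl h
    have := EvWalk.of_chain l _ h
    rw [List.getLast_cons hl] at this
    exact H _ _ this

/-- The submonoid of lengths of closed walks at a vertex. -/
def evLoops {ι : Type*} (E : ι → ι → Prop) (v : ι) : AddSubmonoid ℕ where
  carrier := {n | EvWalk E n v v}
  zero_mem' := rfl
  add_mem' h1 h2 := EvWalk.append h1 h2

theorem ev_period {ι : Type*} (E : ι → ι → Prop) (hne : Nonempty ι)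
    (hout : ∀ u, ∃ v, E u v) (hsc : ∀ u v, ∃ n, EvWalk E n u v) (d : ℕ)
    (hd : (∀ n v, EvWalk E n v v → d ∣ n) ∧
      ∀ c, (∀ n v, EvWalk E n v v → c ∣ n) → c ∣ d) :
    0 < d ∧ ∃ p : ι → ℕ, (∀ n u v, EvWalk E n u v → p u + n ≡ p v [MOD d]) ∧
      ∀ u v, ∃ N, ∀ n, N ≤ n → p u + n ≡ p v [MOD d] → EvWalk E n u v := by
  obtain ⟨r⟩ := hne
  have hpos : 0 < d := by
    obtain ⟨s, hs⟩ := hout r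
    obtain ⟨n, hn⟩ := hsc s r
    have := hd.1 (n + 1) r ⟨s, hs, hn⟩
    exact Nat.pos_of_dvd_of_pos this (by omega)
  have hgcd : ∀ v, Nat.setGcd (evLoops E v : Set ℕ) ∣ d := by
    intro v
    apply hd.2
    intro n w h
    obtain ⟨a, ha⟩ := hsc v w
    obtain ⟨b, hb⟩ := hsc w v
    have h1 : Nat.setGcd (evLoops E v : Set ℕ) ∣ a + b :=
      Nat.setGcd_dvd_of_mem (ha.append hb)
    have h2 : Nat.setGcd (evLoops E v : Set ℕ) ∣ (a + b) + n := by
      rw [show (a + b) + n = a + (n + b) by omega]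
      exact Nat.setGcd_dvd_of_mem (ha.append (h.append hb))
    exact (Nat.dvd_add_right h1).1 h2
  choose p hp using hsc r
  have hmod : ∀ n u v, EvWalk E n u v → p u + n ≡ p v [MOD d] := by
    intro n u v h
    obtain ⟨b, hb⟩ := hsc v r
    have h1 := hd.1 _ _ (((hp u).append h).append hb)
    have h2 := hd.1 _ _ ((hp v).append hb)
    apply Nat.ModEq.add_right_cancel' b
    exact ((Nat.modEq_zero_iff_dvd).2 h1).trans ((Nat.modEq_zero_iff_dvd).2 h2).symm
  refine ⟨hpos, p, hmod, ?_⟩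
  intro u v
  obtain ⟨m, hm⟩ := hsc u v
  obtain ⟨N, hN⟩ := Nat.exists_mem_closure_of_ge (evLoops E v : Set ℕ)
  refine ⟨N + m, fun n hn h => ?_⟩
  have h1 : m ≡ n [MOD d] := Nat.ModEq.add_left_cancel' (p u) ((hmod _ _ _ hm).trans h.symm)
  have h2 : d ∣ n - m := (Nat.modEq_iff_dvd' (by omega)).1 h1
  have h3 := hN (n - m) (by omega) ((hgcd v).trans h2)
  rw [AddSubmonoid.closure_eq] at h3
  have := hm.append h3
  rwa [show m + (n - m) = n by omega] at this

section
variable {K C κ : Type*} [Field K] [NonUnitalNonAssocSemiring C] [Module K C]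
    [SMulCommClass K C C] [IsScalarTower K C C] [Fintype κ]
    (b : Module.Basis κ K C)

theorem ev_mul_basis (hn : ∀ i j : κ, i ≠ j → b i * b j = 0)
    (x : C) (k : κ) :
    b k * x = b.repr x k • (b k * b k) ∧ x * b k = b.repr x k • (b k * b k) := by
  classical
  constructor
  · conv_lhs => rw [← b.sum_repr x]
    rw [Finset.mul_sum, Finset.sum_eq_single k]
    · rw [mul_smul_comm]
    · intro j _ hj; rw [mul_smul_comm, hn _ _ hj.symm, smul_zero]
    · simp
  · conv_lhs => rw [← b.sum_repr x]
    rw [Finset.sum_mul, Finset.sum_eq_single k]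
    · rw [smul_mul_assoc]
    · intro j _ hj; rw [smul_mul_assoc, hn _ _ hj, smul_zero]
    · simp

theorem ev_mul_mem (hn : ∀ i j : κ, i ≠ j → b i * b j = 0)
    (J : Submodule K C) (x a : C)
    (h : ∀ k, b.repr x k ≠ 0 → b k * b k ∈ J) : a * x ∈ J ∧ x * a ∈ J := by
  have key : ∀ k, b.repr x k • (b k * b k) ∈ J := by
    intro k
    by_cases hk : b.repr x k = 0
    · simp [hk]
    · exact J.smul_mem _ (h k hk)
  rw [← b.sum_repr a, Finset.sum_mul, Finset.mul_sum]
  constructor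
  · refine J.sum_mem fun k _ => ?_
    rw [smul_mul_assoc, (ev_mul_basis b hn x k).1]
    exact J.smul_mem _ (key k)
  · refine J.sum_mem fun k _ => ?_
    rw [mul_smul_comm, (ev_mul_basis b hn x k).2]
    exact J.smul_mem _ (key k)

theorem ev_simple_facts (hn : ∀ i j : κ, i ≠ j → b i * b j = 0)
    (hs : (∃ x y : C, x * y ≠ 0) ∧
      ∀ I : Submodule K C, (∀ x ∈ I, ∀ a : C, a * x ∈ I ∧ x * a ∈ I) → I = ⊥ ∨ I = ⊤)
    (E : κ → κ → Prop) (he : ∀ i j : κ, E i j ↔ b.repr (b i * b i) j ≠ 0) :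
    Nonempty κ ∧ Submodule.span K (Set.range fun i => b i * b i) = ⊤ ∧
    (∀ u, ∃ v, E u v) ∧ ∀ u v, ∃ n, EvWalk E n u v := by
  classical
  obtain ⟨⟨x, y, hxy⟩, hs⟩ := hs
  have hspan : Submodule.span K (Set.range fun i => b i * b i) = ⊤ := by
    have hall : ∀ x a : C, a * x ∈ Submodule.span K (Set.range fun i => b i * b i) ∧
        x * a ∈ Submodule.span K (Set.range fun i => b i * b i) := fun x a =>
      ev_mul_mem b hn _ x a fun k _ => Submodule.subset_span ⟨k, rfl⟩
    rcases hs _ (fun x _ a => hall x a) with h | h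
    · have := (hall y x).1
      rw [h, Submodule.mem_bot] at this
      exact absurd this hxy
    · exact h
  have hsc : ∀ u v, ∃ n, EvWalk E n u v := by
    intro u v
    let S : Set κ := {w | ∃ n, EvWalk E n u w}
    have hmem : ∀ x, x ∈ Submodule.span K (b '' S) ↔ ∀ k, b.repr x k ≠ 0 → k ∈ S := by
      intro x
      rw [b.mem_span_image]
      simp [Set.subset_def]
    have hu : u ∈ S := ⟨0, rfl⟩
    rcases hs (Submodule.span K (b '' S)) (by
      intro x hx a
      apply ev_mul_mem b hn
      intro k hk
      obtain ⟨n, hw⟩ := (hmem x).1 hx k hk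
      refine (hmem _).2 fun j hj => ⟨n + 1, ?_⟩
      exact hw.append (n := 1) ⟨j, (he _ _).2 hj, rfl⟩) with h | h
    · have : b u ∈ Submodule.span K (b '' S) := Submodule.subset_span ⟨u, hu, rfl⟩
      rw [h, Submodule.mem_bot] at this
      exact absurd this (b.ne_zero u)
    · have : b v ∈ Submodule.span K (b '' S) := by rw [h]; trivial
      exact (hmem _).1 this v (by simp)
  refine ⟨?_, hspan, ?_, hsc⟩
  · by_contra hemp
    rw [not_nonempty_iff] at hemp
    apply hxy
    rw [← b.sum_repr x]; simp
  · intro u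
    by_contra! hu
    have hz : b u * b u = 0 := by
      apply b.repr.injective
      ext j
      have := hu j
      rw [he, not_not] at this
      simpa using this
    have hone : ∀ v, v = u := by
      intro v
      obtain ⟨n, h⟩ := hsc u v
      cases n with
      | zero => exact h.symm
      | succ n => obtain ⟨w, hw, _⟩ := h; exact absurd hw (hu w)
    apply hxy
    have := (ev_mul_mem b hn ⊥ y x (fun k _ => by rw [hone k, hz]; simp)).1
    simpa using this

theorem ev_decomp (hn : ∀ i j : κ, i ≠ j → b i * b j = 0)
    (hspan : Submodule.span K (Set.range fun i => b i * b i) = ⊤)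
    (hout : ∀ u, b u * b u ≠ 0)
    {n : ℕ} (f : κ → Fin n) (hf : Function.Surjective f)
    (E : κ → κ → Prop) (he : ∀ i j : κ, E i j ↔ b.repr (b i * b i) j ≠ 0)
    (hE : ∀ i j, E i j → f i = f j)
    (hsc : ∀ i j, f i = f j → ∃ n, EvWalk E n i j) :
    ∃ (I : Fin n → Submodule K C),
      (∀ i : Fin n, ∀ x ∈ I i, ∀ a : C, a * x ∈ I i ∧ x * a ∈ I i) ∧
      iSupIndep I ∧ (⨆ i : Fin n, I i) = ⊤ ∧
      (∀ i : Fin n,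
        (∃ x ∈ I i, ∃ y ∈ I i, x * y ≠ 0) ∧
        ∀ J : Submodule K C, J ≤ I i →
          (∀ x ∈ J, ∀ a ∈ I i, a * x ∈ J ∧ x * a ∈ J) → J = ⊥ ∨ J = I i) := by
  classical
  let I : Fin n → Submodule K C := fun c => Submodule.span K (b '' {k | f k = c})
  have hmem : ∀ c x, x ∈ I c ↔ ∀ k, b.repr x k ≠ 0 → f k = c := by
    intro c x
    rw [b.mem_span_image]
    simp [Set.subset_def]
  have hb : ∀ k, b k ∈ I (f k) := fun k => Submodule.subset_span ⟨k, rfl, rfl⟩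
  have hsq : ∀ k, b k * b k ∈ I (f k) := fun k =>
    (hmem _ _).2 fun j hj => (hE _ _ ((he _ _).2 hj)).symm
  let P : Fin n → C →ₗ[K] C := fun c => b.constr K fun k => if f k = c then b k else 0
  have hP : ∀ c k, P c (b k) = if f k = c then b k else 0 := fun c k => by
    simp [P, b.constr_basis]
  have hP1 : ∀ c, ∀ x ∈ I c, P c x = x := by
    intro c x hx
    have : I c ≤ LinearMap.eqLocus (P c) LinearMap.id := by
      refine Submodule.span_le.2 ?_
      rintro _ ⟨k, hk, rfl⟩
      have hk : f k = c := hk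
      simp [LinearMap.mem_eqLocus, hP, hk]
    exact this hx
  have hP0 : ∀ c c', c' ≠ c → I c' ≤ LinearMap.ker (P c) := by
    intro c c' hc
    refine Submodule.span_le.2 ?_
    rintro _ ⟨k, hk, rfl⟩
    have hk : f k = c' := hk
    simp [hP, hk, hc]
  refine ⟨I, ?_, ?_, ?_, ?_⟩
  · intro c x hx a
    refine ev_mul_mem b hn _ _ _ fun k hk => ?_
    rw [← (hmem c x).1 hx k hk]
    exact hsq k
  · intro c
    rw [Submodule.disjoint_def]
    intro x hx hx'
    have h1 : (⨆ j, ⨆ (_ : j ≠ c), I j) ≤ LinearMap.ker (P c) :=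
      iSup_le fun j => iSup_le fun hj => hP0 c j hj
    rw [← hP1 c x hx]
    exact h1 hx'
  · rw [eq_top_iff, ← b.span_eq]
    refine Submodule.span_le.2 ?_
    rintro _ ⟨k, rfl⟩
    exact (le_iSup I (f k)) (hb k)
  · intro c
    constructor
    · obtain ⟨k, rfl⟩ := hf c
      exact ⟨b k, hb k, b k, hb k, hout k⟩
    · intro J hJ hJI
      by_cases hbot : J = ⊥
      · exact Or.inl hbot
      right
      refine le_antisymm hJ ?_
      obtain ⟨x, hxJ, hx0⟩ := Submodule.exists_mem_ne_zero_of_ne_bot hbot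
      have step : ∀ x ∈ J, ∀ k, b.repr x k ≠ 0 → b k * b k ∈ J := by
        intro x hx k hk
        have hkc := (hmem c x).1 (hJ hx) k hk
        have := (hJI x hx (b k) (hkc ▸ hb k)).1
        rw [(ev_mul_basis b hn x k).1] at this
        exact (J.smul_mem_iff hk).1 this
      have prop : ∀ m u v, EvWalk E m u v → b u * b u ∈ J → b v * b v ∈ J := by
        intro m
        induction m with
        | zero => intro u v h hu; cases h; exact hu
        | succ m ih =>
          rintro u v ⟨w, hw, h⟩ hu
          exact ih w v h (step _ hu w ((he _ _).1 hw))
      obtain ⟨k, hk⟩ : ∃ k, b.repr x k ≠ 0 := by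
        by_contra! h
        apply hx0
        apply b.repr.injective
        ext k
        simpa using h k
      have hkc := (hmem c x).1 (hJ hxJ) k hk
      have hall : ∀ j, f j = c → b j * b j ∈ J := by
        intro j hj
        obtain ⟨m, hm⟩ := hsc k j (hkc.trans hj.symm)
        exact prop m k j hm (step x hxJ k hk)
      have htop : ⊤ ≤ J.comap (P c) := by
        rw [← hspan]
        refine Submodule.span_le.2 ?_
        rintro _ ⟨j, rfl⟩
        by_cases hj : f j = c
        · have : P c (b j * b j) = b j * b j := hP1 c _ (hj ▸ hsq j)
          simpa [this] using hall j hj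
        · have : P c (b j * b j) = 0 := hP0 c _ hj (hsq j)
          simp [this]
      intro y hy
      rw [← hP1 c y hy]
      exact htop (Submodule.mem_top (x := y))

end

theorem ev_walk_prod {ι₁ ι₂ : Type*} {E₁ : ι₁ → ι₁ → Prop} {E₂ : ι₂ → ι₂ → Prop} (n : ℕ)
    (u v : ι₁ × ι₂) (h₁ : EvWalk E₁ n u.1 v.1) (h₂ : EvWalk E₂ n u.2 v.2) :
    EvWalk (fun x y : ι₁ × ι₂ => E₁ x.1 y.1 ∧ E₂ x.2 y.2) n u v := by
  induction n generalizing u with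
  | zero => exact Prod.ext h₁ h₂
  | succ n ih =>
    obtain ⟨w₁, hw₁, h₁⟩ := h₁
    obtain ⟨w₂, hw₂, h₂⟩ := h₂
    exact ⟨(w₁, w₂), ⟨hw₁, hw₂⟩, ih (w₁, w₂) h₁ h₂⟩

theorem ev_exists_walk {ι : Type*} {E : ι → ι → Prop} (hout : ∀ u, ∃ v, E u v) (n : ℕ)
    (u : ι) : ∃ v, EvWalk E n u v := by
  induction n generalizing u with
  | zero => exact ⟨u, rfl⟩
  | succ n ih =>
    obtain ⟨w, hw⟩ := hout u
    obtain ⟨v, hv⟩ := ih w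
    exact ⟨v, w, hw, hv⟩

theorem ev_crt (d₁ d₂ a b N : ℕ) (h₁ : 0 < d₁) (h₂ : 0 < d₂)
    (h : a ≡ b [MOD Nat.gcd d₁ d₂]) : ∃ L, N ≤ L ∧ L ≡ a [MOD d₁] ∧ L ≡ b [MOD d₂] := by
  obtain ⟨k, hk1, hk2⟩ := Nat.chineseRemainder' h
  refine ⟨k + N * (d₁ * d₂), ?_, ?_, ?_⟩
  · have : 1 ≤ d₁ * d₂ := Nat.mul_pos h₁ h₂
    nlinarith
  · refine Nat.ModEq.trans ?_ hk1
    rw [show N * (d₁ * d₂) = d₁ * (N * d₂) by ring]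
    simp [Nat.ModEq]
  · refine Nat.ModEq.trans ?_ hk2
    rw [show N * (d₁ * d₂) = d₂ * (N * d₁) by ring]
    simp [Nat.ModEq]

/-- Combinatorial part: classes of the product graph. -/
theorem ev_prod_classes {ι₁ ι₂ : Type*} (E₁ : ι₁ → ι₁ → Prop) (E₂ : ι₂ → ι₂ → Prop)
    (hne₁ : Nonempty ι₁) (hne₂ : Nonempty ι₂)
    (hout₁ : ∀ u, ∃ v, E₁ u v) (hsc₁ : ∀ u v, ∃ n, EvWalk E₁ n u v)
    (hout₂ : ∀ u, ∃ v, E₂ u v) (hsc₂ : ∀ u v, ∃ n, EvWalk E₂ n u v) (d₁ d₂ : ℕ)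
    (hd₁ : (∀ n v, EvWalk E₁ n v v → d₁ ∣ n) ∧
      ∀ c, (∀ n v, EvWalk E₁ n v v → c ∣ n) → c ∣ d₁)
    (hd₂ : (∀ n v, EvWalk E₂ n v v → d₂ ∣ n) ∧
      ∀ c, (∀ n v, EvWalk E₂ n v v → c ∣ n) → c ∣ d₂) :
    ∃ f : ι₁ × ι₂ → Fin (Nat.gcd d₁ d₂), Function.Surjective f ∧
      (∀ i j : ι₁ × ι₂, (E₁ i.1 j.1 ∧ E₂ i.2 j.2) → f i = f j) ∧
      ∀ i j : ι₁ × ι₂, f i = f j →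
        ∃ n, EvWalk (fun x y : ι₁ × ι₂ => E₁ x.1 y.1 ∧ E₂ x.2 y.2) n i j := by
  obtain ⟨hp₁, p₁, hm₁, hl₁⟩ := ev_period E₁ hne₁ hout₁ hsc₁ d₁ hd₁
  obtain ⟨hp₂, p₂, hm₂, hl₂⟩ := ev_period E₂ hne₂ hout₂ hsc₂ d₂ hd₂
  have hg : 0 < Nat.gcd d₁ d₂ := Nat.gcd_pos_of_pos_left _ hp₁
  have hg1 : Nat.gcd d₁ d₂ ∣ d₁ := Nat.gcd_dvd_left _ _
  have hg2 : Nat.gcd d₁ d₂ ∣ d₂ := Nat.gcd_dvd_right _ _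
  generalize hgg : Nat.gcd d₁ d₂ = g at *
  have : NeZero g := ⟨hg.ne'⟩
  let e : ZMod g ≃ Fin g := (ZMod.finEquiv g).toEquiv.symm
  have hc₁ : ∀ n u v, EvWalk E₁ n u v → (p₁ u : ZMod g) + n = p₁ v := by
    intro n u v h
    have := (ZMod.natCast_eq_natCast_iff _ _ _).2 ((hm₁ n u v h).of_dvd hg1)
    exact_mod_cast this
  have hc₂ : ∀ n u v, EvWalk E₂ n u v → (p₂ u : ZMod g) + n = p₂ v := by
    intro n u v h
    have := (ZMod.natCast_eq_natCast_iff _ _ _).2 ((hm₂ n u v h).of_dvd hg2)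
    exact_mod_cast this
  refine ⟨fun x => e ((p₁ x.1 : ZMod g) - p₂ x.2), ?_, ?_, ?_⟩
  · intro c
    obtain ⟨r₁⟩ := hne₁
    obtain ⟨r₂⟩ := hne₂
    obtain ⟨v, hv⟩ := ev_exists_walk hout₁ (e.symm c - p₁ r₁ + p₂ r₂ : ZMod g).val r₁
    refine ⟨(v, r₂), ?_⟩
    have := hc₁ _ _ _ hv
    rw [ZMod.natCast_zmod_val] at this
    show e _ = c
    rw [← Equiv.eq_symm_apply, ← this]
    ring
  · rintro i j ⟨h1, h2⟩
    have h1 := hc₁ 1 i.1 j.1 ⟨_, h1, rfl⟩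
    have h2 := hc₂ 1 i.2 j.2 ⟨_, h2, rfl⟩
    show e _ = e _
    rw [← h1, ← h2]
    congr 1
    ring
  · intro i j h
    have h : (p₁ i.1 : ZMod g) - p₂ i.2 = p₁ j.1 - p₂ j.2 := e.injective h
    obtain ⟨N₁, hN₁⟩ := hl₁ i.1 j.1
    obtain ⟨N₂, hN₂⟩ := hl₂ i.2 j.2
    obtain ⟨m₁, w₁⟩ := hsc₁ i.1 j.1
    obtain ⟨m₂, w₂⟩ := hsc₂ i.2 j.2
    have hm : m₁ ≡ m₂ [MOD Nat.gcd d₁ d₂] := by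
      rw [hgg, ← ZMod.natCast_eq_natCast_iff]
      have a1 := hc₁ _ _ _ w₁
      have a2 := hc₂ _ _ _ w₂
      linear_combination a1 - a2 - h
    obtain ⟨L, hL, hL1, hL2⟩ := ev_crt d₁ d₂ m₁ m₂ (N₁ + N₂) hp₁ hp₂ hm
    refine ⟨L, ev_walk_prod L i j (hN₁ L (by omega) ?_) (hN₂ L (by omega) ?_)⟩
    · exact (hL1.add_left _).trans (hm₁ _ _ _ w₁)
    · exact (hL2.add_left _).trans (hm₂ _ _ _ w₂)

/-- Let `A₁` and `A₂` be finite-dimensional simple evolution algebras over a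
field `K`.  Then `A₁ ⊗[K] A₂` is semisimple: it is the (internal) direct sum of finitely many
two-sided ideals, each of which is a simple algebra; moreover the number of summands equals
`gcd d₁ d₂` where `dᵢ` is the gcd of the lengths of the closed paths of the directed graph of
`Aᵢ` relative to a natural basis. -/
theorem tensor_semisimple {K A₁ A₂ : Type*} [Field K]
    [NonUnitalNonAssocCommRing A₁] [Module K A₁]
    [SMulCommClass K A₁ A₁] [IsScalarTower K A₁ A₁]
    [NonUnitalNonAssocCommRing A₂] [Module K A₂]
    [SMulCommClass K A₂ A₂] [IsScalarTower K A₂ A₂]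
    {ι₁ ι₂ : Type*} [Fintype ι₁] [Fintype ι₂]
    (b₁ : Module.Basis ι₁ K A₁) (hn₁ : ∀ i j : ι₁, i ≠ j → b₁ i * b₁ j = 0)
    (b₂ : Module.Basis ι₂ K A₂) (hn₂ : ∀ i j : ι₂, i ≠ j → b₂ i * b₂ j = 0)
    (hs₁ : (∃ x y : A₁, x * y ≠ 0) ∧
      ∀ I : Submodule K A₁, (∀ x ∈ I, ∀ a : A₁, a * x ∈ I ∧ x * a ∈ I) → I = ⊥ ∨ I = ⊤)
    (hs₂ : (∃ x y : A₂, x * y ≠ 0) ∧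
      ∀ I : Submodule K A₂, (∀ x ∈ I, ∀ a : A₂, a * x ∈ I ∧ x * a ∈ I) → I = ⊥ ∨ I = ⊤)
    (edge₁ : ι₁ → ι₁ → Prop) (he₁ : ∀ i j : ι₁, edge₁ i j ↔ b₁.repr (b₁ i * b₁ i) j ≠ 0)
    (edge₂ : ι₂ → ι₂ → Prop) (he₂ : ∀ i j : ι₂, edge₂ i j ↔ b₂.repr (b₂ i * b₂ i) j ≠ 0)
    (d₁ d₂ : ℕ)
    (hd₁ : (∀ (l : List ι₁) (h : l ≠ []),
        List.Chain edge₁ (l.getLast h) l → d₁ ∣ l.length) ∧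
      ∀ c : ℕ, (∀ (l : List ι₁) (h : l ≠ []),
        List.Chain edge₁ (l.getLast h) l → c ∣ l.length) → c ∣ d₁)
    (hd₂ : (∀ (l : List ι₂) (h : l ≠ []),
        List.Chain edge₂ (l.getLast h) l → d₂ ∣ l.length) ∧
      ∀ c : ℕ, (∀ (l : List ι₂) (h : l ≠ []),
        List.Chain edge₂ (l.getLast h) l → c ∣ l.length) → c ∣ d₂) :
    ∃ (n : ℕ) (I : Fin n → Submodule K (A₁ ⊗[K] A₂)),
      n = Nat.gcd d₁ d₂ ∧
      -- each `I i` is a two-sided ideal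
      (∀ i : Fin n, ∀ x ∈ I i, ∀ a : A₁ ⊗[K] A₂, a * x ∈ I i ∧ x * a ∈ I i) ∧
      -- internal direct sum
      iSupIndep I ∧ (⨆ i : Fin n, I i) = ⊤ ∧
      -- each summand is a simple algebra
      (∀ i : Fin n,
        (∃ x ∈ I i, ∃ y ∈ I i, x * y ≠ 0) ∧
        ∀ J : Submodule K (A₁ ⊗[K] A₂), J ≤ I i →
          (∀ x ∈ J, ∀ a ∈ I i, a * x ∈ J ∧ x * a ∈ J) → J = ⊥ ∨ J = I i) := by
  have hd₁' : (∀ n v, EvWalk edge₁ n v v → d₁ ∣ n) ∧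
      ∀ c, (∀ n v, EvWalk edge₁ n v v → c ∣ n) → c ∣ d₁ :=
    ⟨(evWalk_dvd_iff edge₁ d₁).1 hd₁.1, fun c hc => hd₁.2 c ((evWalk_dvd_iff edge₁ c).2 hc)⟩
  have hd₂' : (∀ n v, EvWalk edge₂ n v v → d₂ ∣ n) ∧
      ∀ c, (∀ n v, EvWalk edge₂ n v v → c ∣ n) → c ∣ d₂ :=
    ⟨(evWalk_dvd_iff edge₂ d₂).1 hd₂.1, fun c hc => hd₂.2 c ((evWalk_dvd_iff edge₂ c).2 hc)⟩
  obtain ⟨hne₁, hspan₁, hout₁, hsc₁⟩ := ev_simple_facts b₁ hn₁ hs₁ edge₁ he₁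
  obtain ⟨hne₂, hspan₂, hout₂, hsc₂⟩ := ev_simple_facts b₂ hn₂ hs₂ edge₂ he₂
  obtain ⟨f, hf, hfE, hfsc⟩ := ev_prod_classes edge₁ edge₂ hne₁ hne₂ hout₁ hsc₁ hout₂ hsc₂
    d₁ d₂ hd₁' hd₂'
  let b := b₁.tensorProduct b₂
  have hsq : ∀ k, b k * b k = (b₁ k.1 * b₁ k.1) ⊗ₜ[K] (b₂ k.2 * b₂ k.2) := by
    intro k
    simp [b, Module.Basis.tensorProduct_apply']
  have hrepr : ∀ i j, b.repr (b i * b i) j =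
      b₁.repr (b₁ i.1 * b₁ i.1) j.1 * b₂.repr (b₂ i.2 * b₂ i.2) j.2 := by
    rintro i ⟨j₁, j₂⟩
    rw [hsq]
    simp [b, Module.Basis.tensorProduct_repr_tmul_apply, mul_comm]
  have hE : ∀ i j : ι₁ × ι₂, (edge₁ i.1 j.1 ∧ edge₂ i.2 j.2) ↔ b.repr (b i * b i) j ≠ 0 := by
    intro i j
    rw [hrepr, he₁, he₂, mul_ne_zero_iff]
  have hn : ∀ i j, i ≠ j → b i * b j = 0 := by
    intro i j hij
    have : b i * b j = (b₁ i.1 * b₁ j.1) ⊗ₜ[K] (b₂ i.2 * b₂ j.2) := by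
      simp [b, Module.Basis.tensorProduct_apply']
    rw [this]
    by_cases h1 : i.1 = j.1
    · have h2 : i.2 ≠ j.2 := fun h2 => hij (Prod.ext h1 h2)
      rw [hn₂ _ _ h2, TensorProduct.tmul_zero]
    · rw [hn₁ _ _ h1, TensorProduct.zero_tmul]
  have hout : ∀ u, b u * b u ≠ 0 := by
    intro u h
    obtain ⟨v₁, h₁⟩ := hout₁ u.1
    obtain ⟨v₂, h₂⟩ := hout₂ u.2
    have := (hE u (v₁, v₂)).1 ⟨h₁, h₂⟩
    rw [h] at this
    simp at this
  have hspan : Submodule.span K (Set.range fun i => b i * b i) = ⊤ := by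
    rw [eq_top_iff, ← TensorProduct.map₂_mk_top_top_eq_top, ← hspan₁, ← hspan₂,
      Submodule.map₂_span_span]
    apply Submodule.span_mono
    rintro _ ⟨_, ⟨i, rfl⟩, _, ⟨j, rfl⟩, rfl⟩
    exact ⟨(i, j), hsq (i, j)⟩
  obtain ⟨I, h1, h2, h3, h4⟩ := ev_decomp b hn hspan hout f hf
    (fun x y => edge₁ x.1 y.1 ∧ edge₂ x.2 y.2) hE hfE hfsc
  exact ⟨_, I, rfl, h1, h2, h3, h4⟩
end

section
/- Let A₁ and A₂ be finite-dimensional simple evolution algebras over a field K. Suppose that for some i ∈ {1,2} the algebra A_i has a natural basis {e_j} and an index j such that the e_j-coordinate of e_j² is nonzero (i.e., the directed graph of A_i has a loop, equivalently dim Diag(A_i) > 0). Then A₁ ⊗_K A₂ (with multiplication (a⊗b)(a'⊗b') = aa' ⊗ bb') is a simple algebra. -/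
open scoped TensorProduct

namespace EvoAux

section
variable {K A ι : Type*} [Field K] [NonUnitalNonAssocSemiring A] [Module K A]
  [SMulCommClass K A A] [IsScalarTower K A A] [Fintype ι]

/-- In a natural basis, multiplying by a basis vector picks out a coordinate. -/
theorem mul_basis (b : Module.Basis ι K A) (hn : ∀ i j : ι, i ≠ j → b i * b j = 0)
    (x : A) (i : ι) : x * b i = b.repr x i • (b i * b i) := by
  conv_lhs => rw [← b.sum_repr x]
  rw [Finset.sum_mul, Finset.sum_eq_single i]
  · rw [smul_mul_assoc]
  · intro j _ hj
    rw [smul_mul_assoc, hn j i hj, smul_zero]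
  · intro h
    exact absurd (Finset.mem_univ i) h

theorem mul_mem_of_basis (b : Module.Basis ι K A) (I : Submodule K A) (x : A)
    (h : ∀ i, x * b i ∈ I) (a : A) : x * a ∈ I := by
  rw [← b.sum_repr a, Finset.mul_sum]
  refine Submodule.sum_mem _ fun i _ => ?_
  rw [mul_smul_comm]
  exact I.smul_mem _ (h i)

/-- Squares of a natural basis span a simple algebra. -/
theorem span_sq (b : Module.Basis ι K A) (hn : ∀ i j : ι, i ≠ j → b i * b j = 0)
    (hs : (∃ x y : A, x * y ≠ 0) ∧
      ∀ I : Submodule K A, (∀ x ∈ I, ∀ a : A, a * x ∈ I ∧ x * a ∈ I) → I = ⊥ ∨ I = ⊤) :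
    Submodule.span K (Set.range fun i => b i * b i) = ⊤ := by
  have key : ∀ x a : A, x * a ∈ Submodule.span K (Set.range fun i => b i * b i) := by
    intro x a
    refine mul_mem_of_basis b _ x (fun i => ?_) a
    rw [mul_basis b hn]
    exact Submodule.smul_mem _ _ (Submodule.subset_span ⟨i, rfl⟩)
  rcases hs.2 _ (fun x _ a => ⟨key a x, key x a⟩) with h | h
  · obtain ⟨x, y, hxy⟩ := hs.1
    have := key x y
    rw [h, Submodule.mem_bot] at this
    exact absurd this hxy
  · exact h

/-- Strong connectivity of the graph of a simple evolution algebra. -/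
theorem conn (b : Module.Basis ι K A) (hn : ∀ i j : ι, i ≠ j → b i * b j = 0)
    (hcomm : ∀ x y : A, x * y = y * x)
    (hs : (∃ x y : A, x * y ≠ 0) ∧
      ∀ I : Submodule K A, (∀ x ∈ I, ∀ a : A, a * x ∈ I ∧ x * a ∈ I) → I = ⊥ ∨ I = ⊤)
    (T : Set ι) (hT : ∀ i ∈ T, ∀ k, b.repr (b i * b i) k ≠ 0 → k ∈ T) (hne : T.Nonempty) (i : ι) :
    i ∈ T := by
  have key : ∀ x ∈ Submodule.span K (b '' T), ∀ a, x * a ∈ Submodule.span K (b '' T) := by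
    intro x hx a
    refine mul_mem_of_basis b _ x (fun i => ?_) a
    rw [mul_basis b hn]
    by_cases h0 : b.repr x i = 0
    · rw [h0, zero_smul]
      exact Submodule.zero_mem _
    · refine Submodule.smul_mem _ _ ?_
      rw [b.mem_span_image] at hx ⊢
      intro k hk
      exact hT i (hx (by simpa using h0)) k (by simpa using hk)
  rcases hs.2 _ (fun x hx a => ⟨by rw [hcomm]; exact key x hx a, key x hx a⟩) with h | h
  · obtain ⟨j, hj⟩ := hne
    have : b j ∈ Submodule.span K (b '' T) := Submodule.subset_span ⟨j, hj, rfl⟩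
    rw [h, Submodule.mem_bot] at this
    exact absurd this (b.ne_zero j)
  · have : b i ∈ Submodule.span K (b '' T) := by rw [h]; trivial
    rw [b.mem_span_image] at this
    exact this (by simp)

theorem in_edge (b : Module.Basis ι K A)
    (h : Submodule.span K (Set.range fun i => b i * b i) = ⊤) (k : ι) :
    ∃ i, b.repr (b i * b i) k ≠ 0 := by
  by_contra! hc
  have : Submodule.span K (Set.range fun i => b i * b i) ≤ LinearMap.ker (b.coord k) := by
    rw [Submodule.span_le]
    rintro _ ⟨i, rfl⟩
    simpa using hc i
  rw [h] at this
  have h1 := this (Submodule.mem_top (x := b k))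
  simp at h1

/-- Converse criterion for simplicity. -/
theorem ideals (b : Module.Basis ι K A) (hn : ∀ i j : ι, i ≠ j → b i * b j = 0)
    (h : Submodule.span K (Set.range fun i => b i * b i) = ⊤)
    (hc : ∀ T : Set ι, (∀ i ∈ T, ∀ k, b.repr (b i * b i) k ≠ 0 → k ∈ T) → T.Nonempty →
      ∀ i, i ∈ T) (I : Submodule K A) (hI : ∀ x ∈ I, ∀ a : A, a * x ∈ I ∧ x * a ∈ I) :
    I = ⊥ ∨ I = ⊤ := by
  have key : ∀ x ∈ I, ∀ i, b.repr x i ≠ 0 → b i * b i ∈ I := by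
    intro x hx i hi
    have := (hI x hx (b i)).2
    rw [mul_basis b hn] at this
    exact (I.smul_mem_iff hi).1 this
  by_cases hb : I = ⊥
  · exact Or.inl hb
  · right
    obtain ⟨x, hx, hx0⟩ := I.exists_mem_ne_zero_of_ne_bot hb
    have : ∃ i, b.repr x i ≠ 0 := by
      by_contra! hh
      exact hx0 (b.ext_elem (by simpa using hh))
    obtain ⟨i, hi⟩ := this
    have hall := hc {i | b i * b i ∈ I} (fun i hi k hk => key _ hi k hk) ⟨i, key x hx i hi⟩
    rw [eq_top_iff, ← h, Submodule.span_le]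
    rintro _ ⟨i, rfl⟩
    exact hall i

end

/-- The product of two strongly connected graphs, one with a loop. -/
theorem product_conn {α β : Type*} (E : α → α → Prop) (F : β → β → Prop)
    (hE : ∀ T : Set α, (∀ i ∈ T, ∀ k, E i k → k ∈ T) → T.Nonempty → ∀ i, i ∈ T)
    (hF : ∀ T : Set β, (∀ i ∈ T, ∀ k, F i k → k ∈ T) → T.Nonempty → ∀ i, i ∈ T)
    (hin : ∀ j, ∃ j', F j' j) (i₀ : α) (hl : E i₀ i₀)
    (S : α → β → Prop) (hS : ∀ i j k l, S i j → E i k → F j l → S k l)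
    (hne : ∃ i j, S i j) (i : α) (j : β) : S i j := by
  have hout : ∀ j, ∃ j', F j j' := by
    intro j
    by_contra! hc
    have := hF {j} (by rintro _ rfl k hk; exact absurd hk (hc k)) ⟨j, rfl⟩
    obtain ⟨j', hj'⟩ := hin j
    have h2 : j' = j := this j'
    exact hc j (h2 ▸ hj')
  have h1 : ∃ j, S i₀ j := hE {i | ∃ j, S i j} (by
    rintro i ⟨j, hj⟩ k hk
    obtain ⟨l, hl⟩ := hout j
    exact ⟨l, hS _ _ _ _ hj hk hl⟩) hne i₀
  have h2 : ∀ j, S i₀ j := hF {j | S i₀ j} (fun j hj l hjl => hS _ _ _ _ hj hl hjl) h1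
  exact hE {i | ∀ j, S i j} (by
    intro i hi k hk j
    obtain ⟨j', hj'⟩ := hin j
    exact hS _ _ _ _ (hi j') hk hj') ⟨i₀, h2⟩ i j

end EvoAux

/-- Let `A₁` and `A₂` be finite-dimensional simple evolution algebras over a
field `K`.  If for some factor the directed graph relative to a natural basis has a loop
(some `i` with the `e_i`-coordinate of `e_i²` nonzero, i.e. `dim Diag > 0`), then
`A₁ ⊗[K] A₂` is a simple algebra. -/
theorem tensor_simple_of_loop {K A₁ A₂ : Type*} [Field K]
    [NonUnitalNonAssocCommRing A₁] [Module K A₁]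
    [SMulCommClass K A₁ A₁] [IsScalarTower K A₁ A₁]
    [NonUnitalNonAssocCommRing A₂] [Module K A₂]
    [SMulCommClass K A₂ A₂] [IsScalarTower K A₂ A₂]
    {ι₁ ι₂ : Type*} [Fintype ι₁] [Fintype ι₂]
    (b₁ : Module.Basis ι₁ K A₁) (hn₁ : ∀ i j : ι₁, i ≠ j → b₁ i * b₁ j = 0)
    (b₂ : Module.Basis ι₂ K A₂) (hn₂ : ∀ i j : ι₂, i ≠ j → b₂ i * b₂ j = 0)
    (hs₁ : (∃ x y : A₁, x * y ≠ 0) ∧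
      ∀ I : Submodule K A₁, (∀ x ∈ I, ∀ a : A₁, a * x ∈ I ∧ x * a ∈ I) → I = ⊥ ∨ I = ⊤)
    (hs₂ : (∃ x y : A₂, x * y ≠ 0) ∧
      ∀ I : Submodule K A₂, (∀ x ∈ I, ∀ a : A₂, a * x ∈ I ∧ x * a ∈ I) → I = ⊥ ∨ I = ⊤)
    (hloop : (∃ i : ι₁, b₁.repr (b₁ i * b₁ i) i ≠ 0) ∨
      (∃ i : ι₂, b₂.repr (b₂ i * b₂ i) i ≠ 0)) :
    (∃ x y : A₁ ⊗[K] A₂, x * y ≠ 0) ∧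
      ∀ I : Submodule K (A₁ ⊗[K] A₂),
        (∀ x ∈ I, ∀ a : A₁ ⊗[K] A₂, a * x ∈ I ∧ x * a ∈ I) → I = ⊥ ∨ I = ⊤ := by
  have sp₁ := EvoAux.span_sq b₁ hn₁ hs₁
  have sp₂ := EvoAux.span_sq b₂ hn₂ hs₂
  have c₁ := EvoAux.conn b₁ hn₁ mul_comm hs₁
  have c₂ := EvoAux.conn b₂ hn₂ mul_comm hs₂
  have in₁ := EvoAux.in_edge b₁ sp₁
  have in₂ := EvoAux.in_edge b₂ sp₂
  constructor
  · obtain ⟨x, y, hxy⟩ := hs₁.1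
    obtain ⟨z, w, hzw⟩ := hs₂.1
    refine ⟨x ⊗ₜ z, y ⊗ₜ w, ?_⟩
    rw [Algebra.TensorProduct.tmul_mul_tmul]
    intro h
    have h1 : ∃ i, b₁.repr (x * y) i ≠ 0 := by
      by_contra! hh
      exact hxy (b₁.ext_elem (by simpa using hh))
    have h2 : ∃ i, b₂.repr (z * w) i ≠ 0 := by
      by_contra! hh
      exact hzw (b₂.ext_elem (by simpa using hh))
    obtain ⟨i, hi⟩ := h1
    obtain ⟨j, hj⟩ := h2
    have h3 := Module.Basis.tensorProduct_repr_tmul_apply b₁ b₂ (x * y) (z * w) i j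
    rw [h, map_zero] at h3
    exact smul_ne_zero hj hi h3.symm
  · have hsq : ∀ p : ι₁ × ι₂, (b₁.tensorProduct b₂) p * (b₁.tensorProduct b₂) p
        = (b₁ p.1 * b₁ p.1) ⊗ₜ[K] (b₂ p.2 * b₂ p.2) := by
      rintro ⟨i, j⟩
      rw [Module.Basis.tensorProduct_apply, Algebra.TensorProduct.tmul_mul_tmul]
    refine EvoAux.ideals (b₁.tensorProduct b₂) ?_ ?_ ?_
    · rintro ⟨i, j⟩ ⟨k, l⟩ h
      rw [Module.Basis.tensorProduct_apply, Module.Basis.tensorProduct_apply,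
        Algebra.TensorProduct.tmul_mul_tmul]
      by_cases hik : i = k
      · have hjl : j ≠ l := fun hjl => h (by rw [hik, hjl])
        rw [hn₂ j l hjl, TensorProduct.tmul_zero]
      · rw [hn₁ i k hik, TensorProduct.zero_tmul]
    · rw [eq_top_iff, ← TensorProduct.span_tmul_eq_top, Submodule.span_le]
      rintro _ ⟨x, y, rfl⟩
      have hx : x ∈ Submodule.span K (Set.range fun i => b₁ i * b₁ i) := by rw [sp₁]; trivial
      have hy : y ∈ Submodule.span K (Set.range fun i => b₂ i * b₂ i) := by rw [sp₂]; trivial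
      have := Submodule.apply_mem_map₂ (TensorProduct.mk K A₁ A₂) hx hy
      rw [Submodule.map₂_span_span] at this
      refine Submodule.span_mono ?_ this
      rintro _ ⟨_, ⟨i, rfl⟩, _, ⟨j, rfl⟩, rfl⟩
      exact ⟨(i, j), hsq (i, j)⟩
    · intro T hT hne p
      have hS : ∀ i j k l, (i, j) ∈ T → b₁.repr (b₁ i * b₁ i) k ≠ 0 →
          b₂.repr (b₂ j * b₂ j) l ≠ 0 → (k, l) ∈ T := by
        intro i j k l hij hk hl
        refine hT (i, j) hij (k, l) ?_
        rw [hsq, Module.Basis.tensorProduct_repr_tmul_apply]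
        exact smul_ne_zero hl hk
      obtain ⟨⟨i, j⟩, hij⟩ := hne
      rcases hloop with ⟨i₀, h₀⟩ | ⟨i₀, h₀⟩
      · exact EvoAux.product_conn (fun i k => b₁.repr (b₁ i * b₁ i) k ≠ 0)
          (fun i k => b₂.repr (b₂ i * b₂ i) k ≠ 0) c₁ c₂ in₂ i₀ h₀ (fun i j => (i, j) ∈ T)
          hS ⟨i, j, hij⟩ p.1 p.2
      · exact EvoAux.product_conn (fun i k => b₂.repr (b₂ i * b₂ i) k ≠ 0)
          (fun i k => b₁.repr (b₁ i * b₁ i) k ≠ 0) c₂ c₁ in₁ i₀ h₀ (fun j i => (i, j) ∈ T)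
          (fun j i l k h hl hk => hS i j k l h hk hl) ⟨j, i, hij⟩ p.2 p.1
end

section
/- Let A be a finite-dimensional evolution algebra over a field K with natural basis B = {e_h}_{h=1}^n, and let I be a two-sided ideal of A of the form I = K·u for some u ∈ A whose support relative to B (the set of indices h such that the e_h-coordinate of u is nonzero) has more than one element. Then the quotient algebra A/I is not simple. -/
/-- Let `A` be a finite-dimensional evolution algebra over a field `K` with
natural basis `b`, and let `I = K·u` be a (two-sided) ideal of `A` where the support of `u`
relative to `b` has more than one element.  Then the quotient algebra `A/I` is not simple:
via the ideal correspondence, it is not the case that both `(A/I)² ≠ 0` (i.e. some product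
`x * y ∉ I`) and every ideal of `A` lying between `I` and `A` equals `I` or `A`. -/
theorem quotient_by_line_not_simple {K A ι : Type*} [Field K]
    [NonUnitalNonAssocCommRing A] [Module K A] [SMulCommClass K A A] [IsScalarTower K A A]
    [Fintype ι]
    (b : Module.Basis ι K A) (hnat : ∀ i j : ι, i ≠ j → b i * b j = 0)
    (u : A)
    (hIdeal : ∀ x ∈ Submodule.span K {u}, ∀ a : A,
      a * x ∈ Submodule.span K {u} ∧ x * a ∈ Submodule.span K {u})
    (hsupp : 1 < (b.repr u).support.card) :
    ¬ ((∃ x y : A, x * y ∉ Submodule.span K {u}) ∧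
        ∀ J : Submodule K A, Submodule.span K {u} ≤ J →
          (∀ x ∈ J, ∀ a : A, a * x ∈ J ∧ x * a ∈ J) →
          J = Submodule.span K {u} ∨ J = ⊤) := by
  classical
  rintro ⟨⟨x, y, hxy⟩, hJ⟩
  have hmul : ∀ (h : ι) (a : A), b h * a = (b.repr a h) • (b h * b h) := by
    intro h a
    conv_lhs => rw [← b.sum_repr a]
    rw [Finset.mul_sum, Finset.sum_eq_single h]
    · rw [mul_smul_comm]
    · intro j _ hj
      rw [mul_smul_comm, hnat h j hj.symm, smul_zero]
    · intro hh
      exact absurd (Finset.mem_univ h) hh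
  obtain ⟨h, hh, k, hk, hne⟩ := Finset.one_lt_card.mp hsupp
  rw [Finsupp.mem_support_iff] at hh hk
  have hsq : b h * b h ∈ Submodule.span K {u} := by
    have h1 := (hIdeal u (Submodule.mem_span_singleton_self u) (b h)).1
    rw [hmul h u] at h1
    exact (Submodule.smul_mem_iff _ hh).1 h1
  -- the annihilator of the quotient, pulled back to the algebra
  let J : Submodule K A :=
    { carrier := {x | ∀ a : A, x * a ∈ Submodule.span K {u}}
      add_mem' := by
        intro p q hp hq a
        rw [add_mul]
        exact add_mem (hp a) (hq a)
      zero_mem' := by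
        intro a
        rw [zero_mul]
        exact zero_mem _
      smul_mem' := by
        intro c p hp a
        rw [smul_mul_assoc]
        exact Submodule.smul_mem _ c (hp a) }
  have hIJ : Submodule.span K {u} ≤ J := fun p hp a => (hIdeal p hp a).2
  have hbJ : b h ∈ J := by
    intro a
    rw [hmul h a]
    exact Submodule.smul_mem _ _ hsq
  rcases hJ J hIJ (fun p hp a => ⟨hIJ (by rw [mul_comm]; exact hp a), hIJ (hp a)⟩) with h1 | h1
  · rw [h1, Submodule.mem_span_singleton] at hbJ
    obtain ⟨c, hc⟩ := hbJ
    have e1 : c * b.repr u h = 1 := by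
      have := congrArg (fun z => b.repr z h) hc
      simpa using this
    have e2 : c * b.repr u k = 0 := by
      have := congrArg (fun z => b.repr z k) hc
      simpa [Finsupp.single_apply, hne] using this
    have c0 : c = 0 := (mul_eq_zero.mp e2).resolve_right hk
    rw [c0, zero_mul] at e1
    exact zero_ne_one e1
  · have hx : x ∈ J := by rw [h1]; trivial
    exact hxy (hx y)
end

section
/- Let A₁ and A₂ be finite-dimensional evolution algebras over a field K, each of dimension greater than 1, and let A = A₁ ⊗_K A₂ with multiplication (a⊗b)(a'⊗b') = aa' ⊗ bb'. If I is a nonzero two-sided ideal of A of the form I = K·u for some u ∈ A, then the quotient algebra A/I is not simple. -/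
open scoped TensorProduct

section Helpers

variable {K A₁ A₂ : Type*} [Field K]
    [NonUnitalNonAssocCommRing A₁] [Module K A₁]
    [SMulCommClass K A₁ A₁] [IsScalarTower K A₁ A₁]
    [NonUnitalNonAssocCommRing A₂] [Module K A₂]
    [SMulCommClass K A₂ A₂] [IsScalarTower K A₂ A₂]

/-- Contraction of the first factor. -/
noncomputable def contrL (A₂ : Type*) [NonUnitalNonAssocCommRing A₂] [Module K A₂]
    (f : A₁ →ₗ[K] K) : A₁ ⊗[K] A₂ →ₗ[K] A₂ :=
  (TensorProduct.lid K A₂).toLinearMap ∘ₗ LinearMap.rTensor A₂ f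

/-- Contraction of the second factor. -/
noncomputable def contrR (A₁ : Type*) [NonUnitalNonAssocCommRing A₁] [Module K A₁]
    (f : A₂ →ₗ[K] K) : A₁ ⊗[K] A₂ →ₗ[K] A₁ :=
  (TensorProduct.rid K A₁).toLinearMap ∘ₗ LinearMap.lTensor A₁ f

theorem contrL_tmul (f : A₁ →ₗ[K] K) (x : A₁) (y : A₂) :
    contrL A₂ f (x ⊗ₜ[K] y) = f x • y := by
  simp [contrL]

theorem contrR_tmul (f : A₂ →ₗ[K] K) (x : A₁) (y : A₂) :
    contrR A₁ f (x ⊗ₜ[K] y) = f y • x := by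
  simp [contrR]

theorem tp_mul_comm (x y : A₁ ⊗[K] A₂) : x * y = y * x := by
  induction x with
  | zero => simp
  | add a b ha hb => rw [add_mul, mul_add, ha, hb]
  | tmul a b =>
    induction y with
    | zero => simp
    | add c d hc hd => rw [add_mul, mul_add, hc, hd]
    | tmul c d =>
      rw [Algebra.TensorProduct.tmul_mul_tmul, Algebra.TensorProduct.tmul_mul_tmul,
        mul_comm a c, mul_comm b d]

/-- A linear map on the tensor product killing products of pure tensors kills products. -/
theorem kill_mul {M : Type*} [AddCommGroup M] [Module K M] (g : A₁ ⊗[K] A₂ →ₗ[K] M)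
    (hg : ∀ a b c d, g ((a * c) ⊗ₜ[K] (b * d)) = 0) (x y : A₁ ⊗[K] A₂) : g (x * y) = 0 := by
  induction x with
  | zero => simp
  | add a b ha hb => rw [add_mul, map_add, ha, hb, add_zero]
  | tmul a b =>
    induction y with
    | zero => simp
    | add c d hc hd => rw [mul_add, map_add, hc, hd, add_zero]
    | tmul c d => rw [Algebra.TensorProduct.tmul_mul_tmul, hg]

theorem finrank_le_one_of_span {M : Type*} [AddCommGroup M] [Module K M] (v : M)
    (h : ∀ y : M, y ∈ Submodule.span K {v}) : Module.finrank K M ≤ 1 := by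
  refine finrank_le_one v fun w => ?_
  obtain ⟨c, hc⟩ := Submodule.mem_span_singleton.1 (h w)
  exact ⟨c, hc⟩

theorem not_surj {M : Type*} [AddCommGroup M] [Module K M] (u : A₁ ⊗[K] A₂)
    (htop : Submodule.span K {z | ∃ x y : A₁ ⊗[K] A₂, x * y = z} ⊔ Submodule.span K {u} = ⊤)
    (hM : 1 < Module.finrank K M) (g : A₁ ⊗[K] A₂ →ₗ[K] M)
    (hg : ∀ a b c d, g ((a * c) ⊗ₜ[K] (b * d)) = 0) : ¬ Function.Surjective g := by
  intro hs
  have : Module.finrank K M ≤ 1 := by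
    refine finrank_le_one_of_span (g u) fun y => ?_
    obtain ⟨x, rfl⟩ := hs y
    have hx : x ∈ Submodule.span K {z | ∃ x y : A₁ ⊗[K] A₂, x * y = z} ⊔
        Submodule.span K {u} := by rw [htop]; trivial
    have hle : Submodule.span K {z | ∃ x y : A₁ ⊗[K] A₂, x * y = z} ⊔
        Submodule.span K {u} ≤ (Submodule.span K {g u}).comap g := by
      refine sup_le (Submodule.span_le.2 ?_) (Submodule.span_le.2 ?_)
      · rintro _ ⟨a, b, rfl⟩
        show g (a * b) ∈ Submodule.span K {g u}
        rw [kill_mul g hg]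
        exact Submodule.zero_mem _
      · rintro _ rfl
        exact Submodule.mem_span_singleton_self _
    exact hle hx
  omega

theorem nat_mul {A ι : Type*} [NonUnitalNonAssocRing A] [Module K A]
    [SMulCommClass K A A] [IsScalarTower K A A] [Fintype ι]
    (b : Module.Basis ι K A) (hn : ∀ i j : ι, i ≠ j → b i * b j = 0) (i : ι) (x : A) :
    b i * x = b.repr x i • (b i * b i) := by
  classical
  conv_lhs => rw [← b.sum_repr x]
  rw [Finset.mul_sum, Finset.sum_eq_single i]
  · rw [mul_smul_comm]
  · intro j _ hj
    rw [mul_smul_comm, hn i j hj.symm, smul_zero]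
  · simp

/-- If no nonzero functional kills all products, the squares of a natural basis form a basis. -/
theorem squares_basis {A ι : Type*} [NonUnitalNonAssocRing A] [Module K A]
    [SMulCommClass K A A] [IsScalarTower K A A] [Fintype ι]
    (b : Module.Basis ι K A) (hn : ∀ i j : ι, i ≠ j → b i * b j = 0)
    (hf : ∀ f : A →ₗ[K] K, (∀ x y, f (x * y) = 0) → f = 0) :
    ∃ s : Module.Basis ι K A, ∀ i, s i = b i * b i := by
  have hspan : Submodule.span K (Set.range fun i => b i * b i) = ⊤ := by
    by_contra hne
    obtain ⟨f, hf0, hfk⟩ := Submodule.exists_le_ker_of_lt_top _ (lt_top_iff_ne_top.2 hne)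
    refine hf0 (hf f fun x y => ?_)
    rw [← b.sum_repr x, Finset.sum_mul, map_sum]
    refine Finset.sum_eq_zero fun i _ => ?_
    rw [smul_mul_assoc, nat_mul b hn, map_smul, map_smul]
    have : f (b i * b i) = 0 := hfk (Submodule.subset_span ⟨i, rfl⟩)
    rw [this, smul_zero, smul_zero]
  have hli := linearIndependent_of_top_le_span_of_card_eq_finrank hspan.ge
    (Module.finrank_eq_card_basis b).symm
  exact ⟨Module.Basis.mk hli hspan.ge, fun i => by simp⟩

end Helpers

/-- Let `A₁`, `A₂` be finite-dimensional evolution algebras over a field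
`K`, each of dimension greater than `1`, and let `A = A₁ ⊗[K] A₂`.  If `I = K·u` is a nonzero
(two-sided) ideal of `A`, then the quotient algebra `A/I` is not simple: via the ideal
correspondence, it is not the case that both `(A/I)² ≠ 0` (some product `x * y ∉ I`) and
every ideal of `A` lying between `I` and `A` equals `I` or `A`. -/
theorem tensor_quotient_by_line_not_simple {K A₁ A₂ : Type*} [Field K]
    [NonUnitalNonAssocCommRing A₁] [Module K A₁]
    [SMulCommClass K A₁ A₁] [IsScalarTower K A₁ A₁]
    [NonUnitalNonAssocCommRing A₂] [Module K A₂]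
    [SMulCommClass K A₂ A₂] [IsScalarTower K A₂ A₂]
    {ι₁ ι₂ : Type*} [Fintype ι₁] [Fintype ι₂]
    (b₁ : Module.Basis ι₁ K A₁) (hn₁ : ∀ i j : ι₁, i ≠ j → b₁ i * b₁ j = 0)
    (b₂ : Module.Basis ι₂ K A₂) (hn₂ : ∀ i j : ι₂, i ≠ j → b₂ i * b₂ j = 0)
    (hdim₁ : 1 < Module.finrank K A₁) (hdim₂ : 1 < Module.finrank K A₂)
    (u : A₁ ⊗[K] A₂) (hu : u ≠ 0)
    (hIdeal : ∀ x ∈ Submodule.span K {u}, ∀ a : A₁ ⊗[K] A₂,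
      a * x ∈ Submodule.span K {u} ∧ x * a ∈ Submodule.span K {u}) :
    ¬ ((∃ x y : A₁ ⊗[K] A₂, x * y ∉ Submodule.span K {u}) ∧
        ∀ J : Submodule K (A₁ ⊗[K] A₂), Submodule.span K {u} ≤ J →
          (∀ x ∈ J, ∀ a : A₁ ⊗[K] A₂, a * x ∈ J ∧ x * a ∈ J) →
          J = Submodule.span K {u} ∨ J = ⊤) := by
  classical
  rintro ⟨⟨x₀, y₀, h₀⟩, hmax⟩
  have htop : Submodule.span K {z | ∃ x y : A₁ ⊗[K] A₂, x * y = z} ⊔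
      Submodule.span K {u} = ⊤ := by
    have hmem : ∀ x y : A₁ ⊗[K] A₂, x * y ∈ Submodule.span K
        {z | ∃ x y : A₁ ⊗[K] A₂, x * y = z} ⊔ Submodule.span K {u} := fun x y =>
      Submodule.mem_sup_left (Submodule.subset_span ⟨x, y, rfl⟩)
    rcases hmax _ le_sup_right (fun x _ a => ⟨hmem a x, hmem x a⟩) with h | h
    · exact absurd (h ▸ hmem x₀ y₀) h₀
    · exact h
  have hf₁ : ∀ f : A₁ →ₗ[K] K, (∀ x y, f (x * y) = 0) → f = 0 := by
    intro f hf
    by_contra hne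
    obtain ⟨x, hx⟩ : ∃ x, f x ≠ 0 := by
      by_contra! h
      exact hne (LinearMap.ext h)
    refine not_surj u htop hdim₂ (contrL A₂ f) (fun a b c d => ?_) fun y => ?_
    · rw [contrL_tmul, hf, zero_smul]
    · exact ⟨x ⊗ₜ[K] ((f x)⁻¹ • y), by rw [contrL_tmul, smul_inv_smul₀ hx]⟩
  have hf₂ : ∀ f : A₂ →ₗ[K] K, (∀ x y, f (x * y) = 0) → f = 0 := by
    intro f hf
    by_contra hne
    obtain ⟨x, hx⟩ : ∃ x, f x ≠ 0 := by
      by_contra! h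
      exact hne (LinearMap.ext h)
    refine not_surj u htop hdim₁ (contrR A₁ f) (fun a b c d => ?_) fun y => ?_
    · rw [contrR_tmul, hf, zero_smul]
    · exact ⟨((f x)⁻¹ • y) ⊗ₜ[K] x, by rw [contrR_tmul, smul_inv_smul₀ hx]⟩
  obtain ⟨s₁, hs₁⟩ := squares_basis b₁ hn₁ hf₁
  obtain ⟨s₂, hs₂⟩ := squares_basis b₂ hn₂ hf₂
  let B := b₁.tensorProduct b₂
  let S := s₁.tensorProduct s₂
  have hB : ∀ p, B p = b₁ p.1 ⊗ₜ[K] b₂ p.2 := fun p => by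
    simp [B, Module.Basis.tensorProduct_apply']
  have hS : ∀ p, S p = B p * B p := fun p => by
    rw [hB, Algebra.TensorProduct.tmul_mul_tmul, ← hs₁, ← hs₂]
    simp [S, Module.Basis.tensorProduct_apply']
  have hnB : ∀ p q, p ≠ q → B p * B q = 0 := by
    intro p q hpq
    rw [hB, hB, Algebra.TensorProduct.tmul_mul_tmul]
    by_cases h : p.1 = q.1
    · have h2 : p.2 ≠ q.2 := fun h' => hpq (Prod.ext h h')
      rw [hn₂ _ _ h2, TensorProduct.tmul_zero]
    · rw [hn₁ _ _ h, TensorProduct.zero_tmul]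
  have hSu : ∀ p, B.repr u p ≠ 0 → ∃ c : K, S p = c • u := by
    intro p hp
    have h := (hIdeal u (Submodule.mem_span_singleton_self u) (B p)).1
    rw [nat_mul B hnB, ← hS] at h
    obtain ⟨c, hc⟩ := Submodule.mem_span_singleton.1 h
    exact ⟨(B.repr u p)⁻¹ * c, by rw [mul_smul, hc, inv_smul_smul₀ hp]⟩
  obtain ⟨p, hp⟩ : ∃ p, B.repr u p ≠ 0 := by
    by_contra! h
    exact hu (B.ext_elem fun i => by simpa using h i)
  obtain ⟨c, hc⟩ := hSu p hp
  have hc0 : c ≠ 0 := by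
    rintro rfl
    exact S.ne_zero p (by rw [hc, zero_smul])
  have hother : ∀ q, q ≠ p → B.repr u q = 0 := by
    intro q hq
    by_contra hne
    obtain ⟨d, hd⟩ := hSu q hne
    have hqp : S q = (d * c⁻¹) • S p := by rw [hc, smul_smul, inv_mul_cancel_right₀ hc0, hd]
    have h1 := congrArg (fun v => S.repr v q) hqp
    simp [Finsupp.single_apply, hq.symm] at h1
  have hueq : u = B.repr u p • B p := by
    conv_lhs => rw [← B.sum_repr u]
    rw [Finset.sum_eq_single p]
    · intro q _ hq
      rw [hother q hq, zero_smul]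
    · simp
  obtain ⟨i, j⟩ := p
  obtain ⟨α, hα⟩ : ∃ α : K, b₁ i * b₁ i = α • b₁ i := by
    have h : S (i, j) = (c * B.repr u (i, j)) • B (i, j) := by
      rw [mul_smul, ← hueq, hc]
    rw [hS, hB, Algebra.TensorProduct.tmul_mul_tmul, ← hs₂] at h
    have h2 := congrArg (contrR A₁ (s₂.coord j)) h
    rw [map_smul, contrR_tmul, contrR_tmul, smul_smul] at h2
    refine ⟨_, Eq.trans ?_ h2⟩
    simp
  have hideal : ∀ (y : A₂) (a : A₁ ⊗[K] A₂),
      a * (b₁ i ⊗ₜ[K] y) ∈ LinearMap.range (TensorProduct.mk K A₁ A₂ (b₁ i)) := by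
    intro y a
    induction a with
    | zero => rw [zero_mul]; exact Submodule.zero_mem _
    | add a b ha hb => rw [add_mul]; exact Submodule.add_mem _ ha hb
    | tmul x z =>
      rw [Algebra.TensorProduct.tmul_mul_tmul, mul_comm x, nat_mul b₁ hn₁, hα, smul_smul,
        TensorProduct.smul_tmul]
      exact ⟨_, rfl⟩
  have huJ : u ∈ LinearMap.range (TensorProduct.mk K A₁ A₂ (b₁ i)) := by
    rw [hueq, hB]
    exact Submodule.smul_mem _ _ ⟨b₂ j, rfl⟩
  rcases hmax (LinearMap.range (TensorProduct.mk K A₁ A₂ (b₁ i)))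
    ((Submodule.span_singleton_le_iff_mem _ _).2 huJ) (by
      rintro _ ⟨y, rfl⟩ a
      have h := hideal y a
      exact ⟨h, by rw [tp_mul_comm]; exact h⟩) with h | h
  · have : Module.finrank K A₂ ≤ 1 := by
      refine finrank_le_one_of_span (contrL A₂ (b₁.coord i) u) fun y => ?_
      have hy : b₁ i ⊗ₜ[K] y ∈ Submodule.span K {u} := by
        rw [← h]; exact ⟨y, rfl⟩
      obtain ⟨d, hd⟩ := Submodule.mem_span_singleton.1 hy
      refine Submodule.mem_span_singleton.2 ⟨d, ?_⟩
      rw [← map_smul, hd, contrL_tmul]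
      simp
    omega
  · have hcard : 1 < Fintype.card ι₁ := by rwa [← Module.finrank_eq_card_basis b₁]
    obtain ⟨k, hk⟩ := Fintype.exists_ne_of_one_lt_card hcard i
    have hmem : b₁ k ⊗ₜ[K] b₂ j ∈ LinearMap.range (TensorProduct.mk K A₁ A₂ (b₁ i)) := by
      rw [h]; trivial
    obtain ⟨y, hy⟩ := hmem
    have h2 := congrArg (contrL A₂ (b₁.coord k)) hy
    rw [TensorProduct.mk_apply, contrL_tmul, contrL_tmul] at h2
    simp [Finsupp.single_apply, hk.symm] at h2
    exact b₂.ne_zero j h2.symm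
end
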